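/- arXiv:1907.10468 — 3 statements merged into one kernel-verified Lean document; each statement's English description precedes it below -/
import Mathlib

section
/- For every integer k ≥ 1, the diagonal game Ĝ₅[k] = ⟨D_k, D_kᵀ⟩ has exactly k Nash equilibria, namely the pure profiles ⟨s, s⟩ for s ∈ [k]; each of these Nash equilibria is symmetric, Pareto-Optimal and Strongly Pareto-Optimal, and yields utility 1 to each player. -/
open Finset

/-- `x` is a probability distribution on the finite type `α`. -/
def IsDist {α : Type*} [Fintype α] (x : α → ℝ) : Prop :=
  (∀ s, 0 ≤ x s) ∧ ∑ s, x s = 1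

/-- Expected utility, in a bimatrix game, of the player whose utility matrix is `M`. -/
noncomputable def pay {α : Type*} [Fintype α] (M : α → α → ℝ) (x y : α → ℝ) : ℝ :=
  ∑ s₁, ∑ s₂, x s₁ * y s₂ * M s₁ s₂

/-- `⟨x, y⟩` is a (mixed) Nash equilibrium of the bimatrix game `⟨R, C⟩`. -/
def IsNash {α : Type*} [Fintype α] (R C : α → α → ℝ) (x y : α → ℝ) : Prop :=
  IsDist x ∧ IsDist y ∧
    (∀ x', IsDist x' → pay R x' y ≤ pay R x y) ∧
    (∀ y', IsDist y' → pay C x y' ≤ pay C x y)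

/-- The Nash equilibrium `⟨x, y⟩` is Pareto-Optimal. -/
def ParetoOpt {α : Type*} [Fintype α] (R C : α → α → ℝ) (x y : α → ℝ) : Prop :=
  ¬ ∃ x' y', IsDist x' ∧ IsDist y' ∧
    (pay R x y < pay R x' y' ∨ pay C x y < pay C x' y') ∧
    pay R x y ≤ pay R x' y' ∧ pay C x y ≤ pay C x' y'

/-- The Nash equilibrium `⟨x, y⟩` is Strongly Pareto-Optimal. -/
def StrongParetoOpt {α : Type*} [Fintype α] (R C : α → α → ℝ) (x y : α → ℝ) : Prop :=
  ∀ x' y', IsDist x' → IsDist y' →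
    (pay R x y < pay R x' y' ∨ pay C x y < pay C x' y') →
    ((x' ≠ x ∧ pay R x' y' ≤ pay R x y) ∨ (y' ≠ y ∧ pay C x' y' ≤ pay C x y))

/-- The mixed strategy putting probability 1 on the single pure strategy `s`. -/
def pureStrat {α : Type*} [DecidableEq α] (s : α) : α → ℝ :=
  fun t => if t = s then 1 else 0

/-- The upper-diagonal `{0,1}`-matrix `D_k`. -/
def diagD (k : ℕ) : Fin k → Fin k → ℝ := fun i j => if i ≤ j then 1 else 0

/-- The transpose `D_kᵀ`. -/
def diagDT (k : ℕ) : Fin k → Fin k → ℝ := fun i j => diagD k j i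

lemma isDist_pure {α : Type*} [Fintype α] [DecidableEq α] (s : α) : IsDist (pureStrat s) := by
  refine ⟨fun t => ?_, by simp [pureStrat]⟩
  unfold pureStrat
  split_ifs <;> norm_num

lemma one_sub_pay {α : Type*} [Fintype α] (M : α → α → ℝ) (x y : α → ℝ)
    (hx : IsDist x) (hy : IsDist y) :
    1 - pay M x y = ∑ i, ∑ j, x i * y j * (1 - M i j) := by
  have h : ∑ i, ∑ j, x i * y j = 1 := by
    rw [← Finset.sum_mul_sum, hx.2, hy.2, one_mul]
  simp only [mul_sub, mul_one, Finset.sum_sub_distrib, h, pay]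

lemma pay_le_one {α : Type*} [Fintype α] (M : α → α → ℝ) (hM : ∀ i j, M i j ≤ 1)
    (x y : α → ℝ) (hx : IsDist x) (hy : IsDist y) : pay M x y ≤ 1 := by
  have h : 0 ≤ 1 - pay M x y := by
    rw [one_sub_pay M x y hx hy]
    exact Finset.sum_nonneg fun i _ => Finset.sum_nonneg fun j _ =>
      mul_nonneg (mul_nonneg (hx.1 i) (hy.1 j)) (sub_nonneg.2 (hM i j))
  linarith

lemma eq_of_pay_eq_one {α : Type*} [Fintype α] (M : α → α → ℝ) (hM : ∀ i j, M i j ≤ 1)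
    (x y : α → ℝ) (hx : IsDist x) (hy : IsDist y) (h : 1 ≤ pay M x y) (i j : α)
    (hi : x i ≠ 0) (hj : y j ≠ 0) : M i j = 1 := by
  have h0 : ∑ i, ∑ j, x i * y j * (1 - M i j) = 0 := by
    rw [← one_sub_pay M x y hx hy]
    linarith [pay_le_one M hM x y hx hy]
  have hn : ∀ i j, 0 ≤ x i * y j * (1 - M i j) := fun i j =>
    mul_nonneg (mul_nonneg (hx.1 i) (hy.1 j)) (sub_nonneg.2 (hM i j))
  have h1 := (Finset.sum_eq_zero_iff_of_nonneg
    (fun i _ => Finset.sum_nonneg fun j _ => hn i j)).1 h0 i (Finset.mem_univ i)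
  have h2 := (Finset.sum_eq_zero_iff_of_nonneg (fun j _ => hn i j)).1 h1 j (Finset.mem_univ j)
  have h3 : 1 - M i j = 0 := by simpa [hi, hj] using h2
  linarith

lemma pay_eq_one {α : Type*} [Fintype α] (M : α → α → ℝ) (x y : α → ℝ)
    (hx : IsDist x) (hy : IsDist y) (h : ∀ i j, x i ≠ 0 → y j ≠ 0 → M i j = 1) :
    pay M x y = 1 := by
  have h0 : 1 - pay M x y = 0 := by
    rw [one_sub_pay M x y hx hy]
    refine Finset.sum_eq_zero fun i _ => Finset.sum_eq_zero fun j _ => ?_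
    by_cases hi : x i = 0
    · simp [hi]
    by_cases hj : y j = 0
    · simp [hj]
    simp [h i j hi hj]
  linarith

lemma pure_ne {α : Type*} [DecidableEq α] {s t : α} (h : pureStrat s t ≠ 0) : t = s := by
  by_contra hc
  exact h (by simp [pureStrat, hc])

lemma dist_exists_ne {α : Type*} [Fintype α] (x : α → ℝ) (hx : IsDist x) : ∃ i, x i ≠ 0 := by
  by_contra hc
  push Not at hc
  have := hx.2
  simp [hc] at this

lemma eq_pure {α : Type*} [Fintype α] [DecidableEq α] (x : α → ℝ) (hx : IsDist x) (s : α)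
    (h : ∀ i, x i ≠ 0 → i = s) : x = pureStrat s := by
  have h0 : ∀ i, i ≠ s → x i = 0 := fun i hi => by
    by_contra hc
    exact hi (h i hc)
  have h1 : x s = 1 := by
    rw [← hx.2]
    exact (Finset.sum_eq_single s (fun i _ hi => h0 i hi) (by simp)).symm
  funext t
  unfold pureStrat
  split_ifs with ht
  · rw [ht, h1]
  · exact h0 t ht

lemma diagD_le (k : ℕ) (i j : Fin k) : diagD k i j ≤ 1 := by
  unfold diagD
  split_ifs <;> norm_num

lemma diagD_one {k : ℕ} {i j : Fin k} : diagD k i j = 1 ↔ i ≤ j := by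
  simp [diagD]

lemma pay_pure (k : ℕ) (s : Fin k) : pay (diagD k) (pureStrat s) (pureStrat s) = 1 ∧
    pay (diagDT k) (pureStrat s) (pureStrat s) = 1 := by
  constructor <;>
  · refine pay_eq_one _ _ _ (isDist_pure s) (isDist_pure s) fun i j hi hj => ?_
    rw [pure_ne hi, pure_ne hj]
    exact diagD_one.2 le_rfl

lemma nash_iff (k : ℕ) (hk : 1 ≤ k) (x y : Fin k → ℝ) :
    IsNash (diagD k) (diagDT k) x y ↔ ∃ s : Fin k, x = pureStrat s ∧ y = pureStrat s := by
  constructor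
  · rintro ⟨hx, hy, h1, h2⟩
    let z : Fin k := ⟨0, hk⟩
    have hz : ∀ i, z ≤ i := fun i => Nat.zero_le _
    have a1 : 1 ≤ pay (diagD k) x y := by
      rw [← pay_eq_one (diagD k) (pureStrat z) y (isDist_pure z) hy
        (fun i j hi _ => by rw [pure_ne hi]; exact diagD_one.2 (hz j))]
      exact h1 _ (isDist_pure z)
    have a2 : 1 ≤ pay (diagDT k) x y := by
      rw [← pay_eq_one (diagDT k) x (pureStrat z) hx (isDist_pure z)
        (fun i j _ hj => by rw [pure_ne hj]; exact diagD_one.2 (hz i))]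
      exact h2 _ (isDist_pure z)
    have key : ∀ i j, x i ≠ 0 → y j ≠ 0 → i = j := fun i j hi hj =>
      le_antisymm
        (diagD_one.1 (eq_of_pay_eq_one _ (diagD_le k) x y hx hy a1 i j hi hj))
        (diagD_one.1 (eq_of_pay_eq_one (diagDT k) (fun i j => diagD_le k j i) x y hx hy a2
          i j hi hj))
    obtain ⟨i, hi⟩ := dist_exists_ne x hx
    obtain ⟨j, hj⟩ := dist_exists_ne y hy
    have hij := key i j hi hj
    subst hij
    exact ⟨i, eq_pure x hx i fun a ha => key a i ha hj,
      eq_pure y hy i fun a ha => (key i a hi ha).symm⟩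
  · rintro ⟨s, rfl, rfl⟩
    refine ⟨isDist_pure s, isDist_pure s, fun x' hx' => ?_, fun y' hy' => ?_⟩
    · rw [(pay_pure k s).1]
      exact pay_le_one _ (diagD_le k) _ _ hx' (isDist_pure s)
    · rw [(pay_pure k s).2]
      exact pay_le_one _ (fun i j => diagD_le k j i) _ _ (isDist_pure s) hy'

/-- For every `k ≥ 1`, the diagonal game `Ĝ₅[k] = ⟨D_k, D_kᵀ⟩` has exactly `k` Nash
equilibria, namely the pure symmetric profiles `⟨s, s⟩` for `s ∈ [k]`; each of them is
Pareto-Optimal and Strongly Pareto-Optimal and yields utility `1` to each player. -/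
theorem diagonal_game_nash (k : ℕ) (hk : 1 ≤ k) :
    (∀ x y : Fin k → ℝ, IsNash (diagD k) (diagDT k) x y ↔
      ∃ s : Fin k, x = pureStrat s ∧ y = pureStrat s) ∧
    {p : (Fin k → ℝ) × (Fin k → ℝ) | IsNash (diagD k) (diagDT k) p.1 p.2}.ncard = k ∧
    (∀ s : Fin k,
      pay (diagD k) (pureStrat s) (pureStrat s) = 1 ∧
      pay (diagDT k) (pureStrat s) (pureStrat s) = 1 ∧
      ParetoOpt (diagD k) (diagDT k) (pureStrat s) (pureStrat s) ∧
      StrongParetoOpt (diagD k) (diagDT k) (pureStrat s) (pureStrat s)) := by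
  refine ⟨nash_iff k hk, ?_, fun s => ?_⟩
  · have hset : {p : (Fin k → ℝ) × (Fin k → ℝ) | IsNash (diagD k) (diagDT k) p.1 p.2} =
        Set.range fun s : Fin k => ((pureStrat s, pureStrat s) : (Fin k → ℝ) × (Fin k → ℝ)) := by
      ext ⟨x, y⟩
      simp only [Set.mem_setOf_eq, nash_iff k hk, Set.mem_range, Prod.mk.injEq]
      exact exists_congr fun s => and_congr eq_comm eq_comm
    have hinj : Function.Injective
        fun s : Fin k => ((pureStrat s, pureStrat s) : (Fin k → ℝ) × (Fin k → ℝ)) := by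
      intro s t hst
      have h := congrFun (Prod.mk.inj hst).1 s
      exact pure_ne (s := t) (t := s) (by rw [← h]; simp [pureStrat])
    rw [hset, ← Set.image_univ, Set.ncard_image_of_injective _ hinj, Set.ncard_univ]
    simp
  · obtain ⟨p1, p2⟩ := pay_pure k s
    have no : ∀ x' y', IsDist x' → IsDist y' →
        ¬ (pay (diagD k) (pureStrat s) (pureStrat s) < pay (diagD k) x' y' ∨
          pay (diagDT k) (pureStrat s) (pureStrat s) < pay (diagDT k) x' y') := by
      intro x' y' hx hy h
      rw [p1, p2] at h
      have b1 := pay_le_one _ (diagD_le k) x' y' hx hy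
      have b2 := pay_le_one (diagDT k) (fun i j => diagD_le k j i) x' y' hx hy
      rcases h with h | h <;> linarith
    refine ⟨p1, p2, ?_, fun x' y' hx hy h => absurd h (no x' y' hx hy)⟩
    rintro ⟨x', y', hx, hy, h, -⟩
    exact no x' y' hx hy h
end

section
/- Let ⟨R,C⟩ be a win-lose bimatrix game with the positive utility property whose set of Nash equilibria is finite, of cardinality m. Then the set of Nash equilibria of the GHR-symmetrization of ⟨R,C⟩ is finite and has cardinality exactly m·(m + 2). -/
open Finset

/-- The pair `p` is a Nash equilibrium of the bimatrix game `⟨R, C⟩`. -/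
def NEPair {α : Type*} [Fintype α] (R C : α → α → ℝ) (p : (α → ℝ) × (α → ℝ)) : Prop :=
  IsNash R C p.1 p.2

/-- All entries of `M` lie in `{0, 1}`. -/
def WinLose {α : Type*} (M : α → α → ℝ) : Prop :=
  ∀ s₁ s₂, M s₁ s₂ = 0 ∨ M s₁ s₂ = 1

/-- The matrix `S = [[0, R], [Cᵀ, 0]]` of the GHR-symmetrization of `⟨R, C⟩`. -/
def ghrS {n : ℕ} (R C : Fin n → Fin n → ℝ) :
    (Fin n ⊕ Fin n) → (Fin n ⊕ Fin n) → ℝ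
  | .inl i, .inr j => R i j
  | .inr i, .inl j => C j i
  | _, _ => 0

/-- The transpose `Sᵀ` of the matrix of the GHR-symmetrization. -/
def ghrST {n : ℕ} (R C : Fin n → Fin n → ℝ) :
    (Fin n ⊕ Fin n) → (Fin n ⊕ Fin n) → ℝ :=
  fun a b => ghrS R C b a

/-- The balanced mixture `a ∗ b` of `a` and `b`, a mixed profile of the
GHR-symmetrization of `⟨R, C⟩` (the two halves of each strategy vector being indexed
by `Fin n ⊕ Fin n`). -/
noncomputable def bmix {n : ℕ} (R C : Fin n → Fin n → ℝ)
    (a b : (Fin n → ℝ) × (Fin n → ℝ)) :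
    ((Fin n ⊕ Fin n) → ℝ) × ((Fin n ⊕ Fin n) → ℝ) :=
  ( Sum.elim (fun s => pay R b.1 b.2 / (pay R b.1 b.2 + pay C a.1 a.2) * a.1 s)
             (fun s => pay C a.1 a.2 / (pay R b.1 b.2 + pay C a.1 a.2) * b.2 s),
    Sum.elim (fun s => pay R a.1 a.2 / (pay R a.1 a.2 + pay C b.1 b.2) * b.1 s)
             (fun s => pay C b.1 b.2 / (pay R a.1 a.2 + pay C b.1 b.2) * a.2 s) )

noncomputable def rowv {α β : Type*} [Fintype β] (M : α → β → ℝ) (y : β → ℝ) (i : α) : ℝ :=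
  ∑ j, M i j * y j

def Best {α β : Type*} [Fintype β] (M : α → β → ℝ) (x : α → ℝ) (y : β → ℝ) (u : ℝ) : Prop :=
  ∀ i, rowv M y i ≤ u ∧ (0 < x i → rowv M y i = u)

def PosM {α β : Type*} (M : α → β → ℝ) : Prop :=
  (∀ i j, 0 ≤ M i j) ∧ ∀ j, ∃ i, 0 < M i j

theorem pay_eq_row {α : Type*} [Fintype α] (M : α → α → ℝ) (x y : α → ℝ) :
    pay M x y = ∑ i, x i * rowv M y i := by
  unfold pay rowv
  refine Finset.sum_congr rfl fun i _ => ?_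
  rw [Finset.mul_sum]
  exact Finset.sum_congr rfl fun j _ => by ring

theorem pay_swap {α : Type*} [Fintype α] (M : α → α → ℝ) (x y : α → ℝ) :
    pay M x y = pay (fun i j => M j i) y x := by
  unfold pay
  rw [Finset.sum_comm]
  exact Finset.sum_congr rfl fun i _ => Finset.sum_congr rfl fun j _ => by ring

theorem Best.pay_eq {α : Type*} [Fintype α] {M : α → α → ℝ} {x y : α → ℝ} {u : ℝ}
    (h : Best M x y u) (hx : IsDist x) : pay M x y = u := by
  rw [pay_eq_row]
  have : ∀ i ∈ Finset.univ, x i * rowv M y i = x i * u := by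
    intro i _
    rcases (hx.1 i).eq_or_lt with h0 | h0
    · rw [← h0]; simp
    · rw [(h i).2 h0]
  rw [Finset.sum_congr rfl this, ← Finset.sum_mul, hx.2, one_mul]

theorem best_of_max {α : Type*} [Fintype α] {M : α → α → ℝ} {x y : α → ℝ}
    (hx : IsDist x) (h : ∀ x', IsDist x' → pay M x' y ≤ pay M x y) :
    Best M x y (pay M x y) := by
  classical
  have h1 : ∀ i, rowv M y i ≤ pay M x y := by
    intro i
    have hd : IsDist (Pi.single i (1 : ℝ)) := by
      refine ⟨fun s => ?_, by simp⟩
      by_cases hs : s = i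
      · subst hs; simp
      · simp [hs]
    have := h _ hd
    rw [pay_eq_row M (Pi.single i 1)] at this
    simpa [Pi.single_apply] using this
  refine fun i => ⟨h1 i, fun hi => ?_⟩
  have hs : ∑ k, x k * (pay M x y - rowv M y k) = 0 := by
    simp_rw [mul_sub]
    rw [Finset.sum_sub_distrib, ← Finset.sum_mul, hx.2, ← pay_eq_row]; ring
  have := (Finset.sum_eq_zero_iff_of_nonneg
    (fun k _ => mul_nonneg (hx.1 k) (sub_nonneg.2 (h1 k)))).1 hs i (Finset.mem_univ i)
  rcases mul_eq_zero.1 this with h2 | h2 <;> linarith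

theorem Best.max {α : Type*} [Fintype α] {M : α → α → ℝ} {x y : α → ℝ} {u : ℝ}
    (h : Best M x y u) (hx : IsDist x) (x' : α → ℝ) (hx' : IsDist x') :
    pay M x' y ≤ pay M x y := by
  rw [h.pay_eq hx, pay_eq_row]
  calc ∑ i, x' i * rowv M y i ≤ ∑ i, x' i * u :=
        Finset.sum_le_sum fun i _ => mul_le_mul_of_nonneg_left (h i).1 (hx'.1 i)
    _ = u := by rw [← Finset.sum_mul, hx'.2, one_mul]

theorem nash_iff_s15 {α : Type*} [Fintype α] (R C : α → α → ℝ) (x y : α → ℝ) :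
    IsNash R C x y ↔ IsDist x ∧ IsDist y ∧ (∃ u, Best R x y u) ∧
      ∃ v, Best (fun i j => C j i) y x v := by
  constructor
  · rintro ⟨hx, hy, h1, h2⟩
    refine ⟨hx, hy, ⟨_, best_of_max hx h1⟩, ⟨_, best_of_max hy fun y' hy' => ?_⟩⟩
    rw [← pay_swap C x y', ← pay_swap C x y]; exact h2 y' hy'
  · rintro ⟨hx, hy, ⟨u, hu⟩, ⟨v, hv⟩⟩
    refine ⟨hx, hy, fun x' hx' => hu.max hx x' hx', fun y' hy' => ?_⟩
    rw [pay_swap C x y', pay_swap C x y]; exact hv.max hy y' hy'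

theorem rowv_scale {α β : Type*} [Fintype β] (M : α → β → ℝ) (y : β → ℝ) (d : ℝ) (i : α) :
    rowv M (fun j => d * y j) i = d * rowv M y i := by
  unfold rowv
  rw [Finset.mul_sum]
  exact Finset.sum_congr rfl fun j _ => by ring

theorem Best.scale {α β : Type*} [Fintype β] {M : α → β → ℝ} {x : α → ℝ} {y : β → ℝ} {u : ℝ}
    (h : Best M x y u) {c d : ℝ} (hc : 0 < c) (hd : 0 < d) :
    Best M (fun i => c * x i) (fun j => d * y j) (d * u) := by
  intro i
  rw [rowv_scale]
  refine ⟨mul_le_mul_of_nonneg_left (h i).1 hd.le, fun hi => ?_⟩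
  rw [(h i).2 ((mul_pos_iff_of_pos_left hc).1 hi)]

theorem Best.pos {α β : Type*} [Fintype β] {M : α → β → ℝ} {x : α → ℝ} {y : β → ℝ} {u : ℝ}
    (h : Best M x y u) (hM : PosM M) (hy : ∀ j, 0 ≤ y j) (hs : 0 < ∑ j, y j) : 0 < u := by
  obtain ⟨j, _, hj⟩ := Finset.exists_lt_of_sum_lt (s := Finset.univ) (f := fun _ : β => (0 : ℝ))
    (g := y) (by simpa using hs)
  obtain ⟨i, hi⟩ := hM.2 j
  refine lt_of_lt_of_le ?_ (h i).1
  exact Finset.sum_pos' (fun k _ => mul_nonneg (hM.1 i k) (hy k))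
    ⟨j, Finset.mem_univ j, mul_pos hi hj⟩

theorem Best.opp_pos {α β : Type*} [Fintype α] [Fintype β] {M : α → β → ℝ} {x : α → ℝ}
    {y : β → ℝ} {u : ℝ}
    (h : Best M x y u) (hu : 0 < u) (hy : ∀ j, 0 ≤ y j) (hs : 0 < ∑ j, x j) :
    0 < ∑ j, y j := by
  by_contra hc
  have h0 : ∑ j, y j = 0 := le_antisymm (not_lt.1 hc) (Finset.sum_nonneg fun j _ => hy j)
  have h1 := (Finset.sum_eq_zero_iff_of_nonneg (fun j _ => hy j)).1 h0
  obtain ⟨j, _, hj⟩ := Finset.exists_lt_of_sum_lt (s := Finset.univ) (f := fun _ : α => (0 : ℝ))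
    (g := x) (by simpa using hs)
  have := (h j).2 hj
  unfold rowv at this
  rw [Finset.sum_eq_zero fun k hk => by rw [h1 k hk, mul_zero]] at this
  linarith

theorem best_zero {α β : Type*} [Fintype β] (M : α → β → ℝ) {u : ℝ} (hu : 0 ≤ u) :
    Best M (fun _ => 0) (fun _ => 0) u := by
  intro i
  simp [rowv, hu]

theorem row_inl {n : ℕ} (R C : Fin n → Fin n → ℝ) (q : Fin n ⊕ Fin n → ℝ) (i : Fin n) :
    rowv (ghrS R C) q (.inl i) = rowv R (fun j => q (.inr j)) i := by
  simp [rowv, ghrS]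

theorem row_inr {n : ℕ} (R C : Fin n → Fin n → ℝ) (q : Fin n ⊕ Fin n → ℝ) (i : Fin n) :
    rowv (ghrS R C) q (.inr i) = rowv (fun i j => C j i) (fun j => q (.inl j)) i := by
  simp [rowv, ghrS]

theorem best_ghr {n : ℕ} (R C : Fin n → Fin n → ℝ) (p q : Fin n ⊕ Fin n → ℝ) (u : ℝ) :
    Best (ghrS R C) p q u ↔
      Best R (fun i => p (.inl i)) (fun i => q (.inr i)) u ∧
      Best (fun i j => C j i) (fun i => p (.inr i)) (fun i => q (.inl i)) u := by
  unfold Best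
  rw [Sum.forall]
  simp only [row_inl, row_inr]

theorem nash_ghr {n : ℕ} (R C : Fin n → Fin n → ℝ) (p q : Fin n ⊕ Fin n → ℝ) :
    IsNash (ghrS R C) (ghrST R C) p q ↔ IsDist p ∧ IsDist q ∧
      (∃ u, Best R (fun i => p (.inl i)) (fun i => q (.inr i)) u ∧
      Best (fun i j => C j i) (fun i => p (.inr i)) (fun i => q (.inl i)) u) ∧
      ∃ v, Best R (fun i => q (.inl i)) (fun i => p (.inr i)) v ∧
      Best (fun i j => C j i) (fun i => q (.inr i)) (fun i => p (.inl i)) v := by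
  rw [nash_iff_s15]
  have : (fun i j => ghrST R C j i) = ghrS R C := rfl
  rw [this]
  simp only [best_ghr]

theorem IsDist.normalize {α : Type*} [Fintype α] {x : α → ℝ} (h : ∀ i, 0 ≤ x i)
    (hs : 0 < ∑ i, x i) : IsDist (fun i => (∑ i, x i)⁻¹ * x i) :=
  ⟨fun i => mul_nonneg (inv_nonneg.2 hs.le) (h i), by
    rw [← Finset.mul_sum, inv_mul_cancel₀ hs.ne']⟩

theorem IsDist.eq_of_scale {α : Type*} [Fintype α] {x y : α → ℝ} (hx : IsDist x) (hy : IsDist y)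
    {c d : ℝ} (hc : 0 < c) (h : ∀ i, c * x i = d * y i) : x = y := by
  have h1 : ∑ i, c * x i = ∑ i, d * y i := Finset.sum_congr rfl fun i _ => h i
  rw [← Finset.mul_sum, ← Finset.mul_sum, hx.2, hy.2, mul_one, mul_one] at h1
  subst h1
  exact funext fun i => mul_left_cancel₀ hc.ne' (h i)

theorem IsDist.mix {n : ℕ} {x y : Fin n → ℝ} (hx : IsDist x) (hy : IsDist y) {c d : ℝ}
    (hc : 0 ≤ c) (hd : 0 ≤ d) (h : c + d = 1) :
    IsDist (Sum.elim (fun s => c * x s) (fun s => d * y s)) := by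
  refine ⟨?_, ?_⟩
  · rintro (i | i)
    · exact mul_nonneg hc (hx.1 i)
    · exact mul_nonneg hd (hy.1 i)
  · simp [← Finset.mul_sum, hx.2, hy.2, h]

theorem IsDist.not_zero {α : Type*} [Fintype α] {x : α → ℝ} (hx : IsDist x) {c : ℝ} (hc : 0 < c)
    (h : ∀ i, c * x i = 0) : False := by
  have h1 : ∑ i, c * x i = 0 := Finset.sum_eq_zero fun i _ => h i
  rw [← Finset.mul_sum, hx.2] at h1
  linarith

theorem nash_data {n : ℕ} {R C : Fin n → Fin n → ℝ} (hR : PosM R) (hC : PosM (fun i j => C j i))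
    {x y : Fin n → ℝ} (h : IsNash R C x y) :
    IsDist x ∧ IsDist y ∧ 0 < pay R x y ∧ 0 < pay C x y ∧ Best R x y (pay R x y) ∧
      Best (fun i j => C j i) y x (pay C x y) := by
  obtain ⟨hx, hy, ⟨u, hu⟩, ⟨v, hv⟩⟩ := (nash_iff_s15 R C x y).1 h
  have e1 := hu.pay_eq hx
  have e2 := hv.pay_eq hy
  rw [← pay_swap] at e2
  rw [e1, e2]
  exact ⟨hx, hy, hu.pos hR hy.1 (by rw [hy.2]; exact one_pos),
    hv.pos hC hx.1 (by rw [hx.2]; exact one_pos), hu, hv⟩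

theorem bmix_nash {n : ℕ} {R C : Fin n → Fin n → ℝ} (hR : PosM R) (hC : PosM (fun i j => C j i))
    {a b : (Fin n → ℝ) × (Fin n → ℝ)} (ha : IsNash R C a.1 a.2) (hb : IsNash R C b.1 b.2) :
    IsNash (ghrS R C) (ghrST R C) (bmix R C a b).1 (bmix R C a b).2 := by
  obtain ⟨a1, a2, ar, ac, aR, aC⟩ := nash_data hR hC ha
  obtain ⟨b1, b2, br, bc, bR, bC⟩ := nash_data hR hC hb
  rw [nash_ghr]
  refine ⟨IsDist.mix a1 b2 (by positivity) (by positivity) (by field_simp),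
    IsDist.mix b1 a2 (by positivity) (by positivity) (by field_simp), 
    ⟨pay C b.1 b.2 / (pay R a.1 a.2 + pay C b.1 b.2) * pay R a.1 a.2,
      aR.scale (by positivity) (by positivity), ?_⟩,
    ⟨pay C a.1 a.2 / (pay R b.1 b.2 + pay C a.1 a.2) * pay R b.1 b.2,
      bR.scale (by positivity) (by positivity), ?_⟩⟩
  · have := bC.scale (c := pay C a.1 a.2 / (pay R b.1 b.2 + pay C a.1 a.2))
      (d := pay R a.1 a.2 / (pay R a.1 a.2 + pay C b.1 b.2)) (by positivity) (by positivity)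
    have e : pay C b.1 b.2 / (pay R a.1 a.2 + pay C b.1 b.2) * pay R a.1 a.2 =
        pay R a.1 a.2 / (pay R a.1 a.2 + pay C b.1 b.2) * pay C b.1 b.2 := by ring
    rw [e]
    exact this
  · have := aC.scale (c := pay C b.1 b.2 / (pay R a.1 a.2 + pay C b.1 b.2))
      (d := pay R b.1 b.2 / (pay R b.1 b.2 + pay C a.1 a.2)) (by positivity) (by positivity)
    have e : pay C a.1 a.2 / (pay R b.1 b.2 + pay C a.1 a.2) * pay R b.1 b.2 =
        pay R b.1 b.2 / (pay R b.1 b.2 + pay C a.1 a.2) * pay C a.1 a.2 := by ring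
    rw [e]
    exact this

def emb1 {n : ℕ} (a : (Fin n → ℝ) × (Fin n → ℝ)) :
    ((Fin n ⊕ Fin n) → ℝ) × ((Fin n ⊕ Fin n) → ℝ) :=
  (Sum.elim a.1 (fun _ => 0), Sum.elim (fun _ => 0) a.2)

def emb2 {n : ℕ} (a : (Fin n → ℝ) × (Fin n → ℝ)) :
    ((Fin n ⊕ Fin n) → ℝ) × ((Fin n ⊕ Fin n) → ℝ) :=
  (Sum.elim (fun _ => 0) a.2, Sum.elim a.1 (fun _ => 0))

theorem IsDist.left {n : ℕ} {x : Fin n → ℝ} (hx : IsDist x) :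
    IsDist (Sum.elim x (fun _ : Fin n => (0 : ℝ))) := by
  refine ⟨?_, by simp [hx.2]⟩
  rintro (i | i)
  · exact hx.1 i
  · exact le_rfl

theorem IsDist.right {n : ℕ} {x : Fin n → ℝ} (hx : IsDist x) :
    IsDist (Sum.elim (fun _ : Fin n => (0 : ℝ)) x) := by
  refine ⟨?_, by simp [hx.2]⟩
  rintro (i | i)
  · exact le_rfl
  · exact hx.1 i

theorem emb1_nash {n : ℕ} {R C : Fin n → Fin n → ℝ} (hR : PosM R) (hC : PosM (fun i j => C j i))
    {a : (Fin n → ℝ) × (Fin n → ℝ)} (ha : IsNash R C a.1 a.2) :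
    IsNash (ghrS R C) (ghrST R C) (emb1 a).1 (emb1 a).2 := by
  obtain ⟨a1, a2, ar, ac, aR, aC⟩ := nash_data hR hC ha
  rw [nash_ghr]
  exact ⟨a1.left, a2.right, ⟨_, aR, best_zero _ ar.le⟩, ⟨_, best_zero _ ac.le, aC⟩⟩

theorem emb2_nash {n : ℕ} {R C : Fin n → Fin n → ℝ} (hR : PosM R) (hC : PosM (fun i j => C j i))
    {a : (Fin n → ℝ) × (Fin n → ℝ)} (ha : IsNash R C a.1 a.2) :
    IsNash (ghrS R C) (ghrST R C) (emb2 a).1 (emb2 a).2 := by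
  obtain ⟨a1, a2, ar, ac, aR, aC⟩ := nash_data hR hC ha
  rw [nash_ghr]
  exact ⟨a2.right, a1.left, ⟨_, best_zero _ ac.le, aC⟩, ⟨_, aR, best_zero _ ar.le⟩⟩

theorem sum_pos_or {n : ℕ} {x : Fin n → ℝ} (h : ∀ i, 0 ≤ x i) :
    0 < ∑ i, x i ∨ ∀ i, x i = 0 := by
  rcases (Finset.sum_nonneg fun i (_ : i ∈ Finset.univ) => h i).eq_or_lt with h0 | h0
  · right
    intro i
    exact (Finset.sum_eq_zero_iff_of_nonneg (fun i _ => h i)).1 h0.symm i (Finset.mem_univ i)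
  · exact Or.inl h0

theorem ghr_surj {n : ℕ} {R C : Fin n → Fin n → ℝ} (hR : PosM R) (hC : PosM (fun i j => C j i))
    (p q : Fin n ⊕ Fin n → ℝ) (h : IsNash (ghrS R C) (ghrST R C) p q) :
    (∃ a b, IsNash R C a.1 a.2 ∧ IsNash R C b.1 b.2 ∧ bmix R C a b = (p, q)) ∨
    (∃ a, IsNash R C a.1 a.2 ∧ emb1 a = (p, q)) ∨
    (∃ a, IsNash R C a.1 a.2 ∧ emb2 a = (p, q)) := by
  obtain ⟨hp, hq, ⟨u, u1, u2⟩, ⟨v, v1, v2⟩⟩ := (nash_ghr R C p q).1 h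
  have sp := hp.2
  have sq := hq.2
  rw [Fintype.sum_sum_type] at sp sq
  have np1 : ∀ i, 0 ≤ p (.inl i) := fun i => hp.1 _
  have np2 : ∀ i, 0 ≤ p (.inr i) := fun i => hp.1 _
  have nq1 : ∀ i, 0 ≤ q (.inl i) := fun i => hq.1 _
  have nq2 : ∀ i, 0 ≤ q (.inr i) := fun i => hq.1 _
  have up : 0 < u := by
    rcases sum_pos_or nq1 with h1 | h1
    · exact u2.pos hC nq1 h1
    · refine u1.pos hR nq2 ?_
      simp [h1] at sq
      rw [sq]; exact one_pos
  have vp : 0 < v := by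
    rcases sum_pos_or np1 with h1 | h1
    · exact v2.pos hC np1 h1
    · refine v1.pos hR np2 ?_
      simp [h1] at sp
      rw [sp]; exact one_pos
  have i1 := u1.opp_pos up nq2
  have i2 := u2.opp_pos up nq1
  have i3 := v1.opp_pos vp np2
  have i4 := v2.opp_pos vp np1
  rcases sum_pos_or np1 with c1 | c1
  · have c2 := i1 c1
    rcases sum_pos_or np2 with d1 | d1
    · have d2 := i2 d1
      left
      have A1 := IsDist.normalize np1 c1
      have A2 := IsDist.normalize nq2 c2
      have B1 := IsDist.normalize nq1 d2
      have B2 := IsDist.normalize np2 d1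
      have e1 := u1.scale (inv_pos.2 c1) (inv_pos.2 c2)
      have e2 := v2.scale (inv_pos.2 c2) (inv_pos.2 c1)
      have e3 := v1.scale (inv_pos.2 d2) (inv_pos.2 d1)
      have e4 := u2.scale (inv_pos.2 d1) (inv_pos.2 d2)
      refine ⟨(_, _), (_, _), (nash_iff_s15 R C _ _).2 ⟨A1, A2, ⟨_, e1⟩, ⟨_, e2⟩⟩,
        (nash_iff_s15 R C _ _).2 ⟨B1, B2, ⟨_, e3⟩, ⟨_, e4⟩⟩, ?_⟩
      have f1 := e1.pay_eq A1
      have f2 := e2.pay_eq A2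
      have f3 := e3.pay_eq B1
      have f4 := e4.pay_eq B2
      rw [← pay_swap] at f2 f4
      have key : ∀ s t w : ℝ, 0 < s → 0 < t → 0 < w → s + t = 1 →
          t⁻¹ * w / (t⁻¹ * w + s⁻¹ * w) = s ∧ s⁻¹ * w / (t⁻¹ * w + s⁻¹ * w) = t := by
        intro s t w hs ht hw hst
        have e : t⁻¹ * w + s⁻¹ * w = w * (s⁻¹ * t⁻¹) := by
          field_simp; linarith
        rw [e]
        constructor <;> field_simp
      obtain ⟨k1, k2⟩ := key _ _ v c1 d1 vp sp
      obtain ⟨k3, k4⟩ := key _ _ u d2 c2 up sq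
      unfold bmix
      simp only [f1, f2, f3, f4, k1, k2, k3, k4]
      refine Prod.ext (funext ?_) (funext ?_)
      · rintro (i | i)
        · exact mul_inv_cancel_left₀ c1.ne' _
        · exact mul_inv_cancel_left₀ d1.ne' _
      · rintro (i | i)
        · exact mul_inv_cancel_left₀ d2.ne' _
        · exact mul_inv_cancel_left₀ c2.ne' _
    · right; left
      have d2 : ∀ i, q (.inl i) = 0 := by
        rcases sum_pos_or nq1 with h1 | h1
        · have := i3 h1
          simp [d1] at this
        · exact h1
      simp only [d1, d2, Finset.sum_const_zero, add_zero, zero_add] at sp sq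
      refine ⟨(fun i => p (.inl i), fun i => q (.inr i)),
        (nash_iff_s15 R C _ _).2 ⟨⟨np1, sp⟩, ⟨nq2, sq⟩, ⟨_, u1⟩, ⟨_, v2⟩⟩, ?_⟩
      refine Prod.ext (funext ?_) (funext ?_)
      · rintro (i | i)
        · rfl
        · exact (d1 i).symm
      · rintro (i | i)
        · exact (d2 i).symm
        · rfl
  · right; right
    have d2 : ∀ i, q (.inr i) = 0 := by
      rcases sum_pos_or nq2 with h1 | h1
      · have := i4 h1
        simp [c1] at this
      · exact h1
    simp only [c1, d2, Finset.sum_const_zero, add_zero, zero_add] at sp sq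
    refine ⟨(fun i => q (.inl i), fun i => p (.inr i)),
      (nash_iff_s15 R C _ _).2 ⟨⟨nq1, sq⟩, ⟨np2, sp⟩, ⟨_, v1⟩, ⟨_, u2⟩⟩, ?_⟩
    refine Prod.ext (funext ?_) (funext ?_)
    · rintro (i | i)
      · exact (c1 i).symm
      · rfl
    · rintro (i | i)
      · rfl
      · exact (d2 i).symm

theorem bmix_inj {n : ℕ} {R C : Fin n → Fin n → ℝ} (hR : PosM R) (hC : PosM (fun i j => C j i))
    {a b a' b' : (Fin n → ℝ) × (Fin n → ℝ)} (ha : IsNash R C a.1 a.2) (hb : IsNash R C b.1 b.2)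
    (ha' : IsNash R C a'.1 a'.2) (hb' : IsNash R C b'.1 b'.2)
    (h : bmix R C a b = bmix R C a' b') : a = a' ∧ b = b' := by
  obtain ⟨a1, a2, ar, ac, -, -⟩ := nash_data hR hC ha
  obtain ⟨b1, b2, br, bc, -, -⟩ := nash_data hR hC hb
  have h1 := fun i => congrFun (congrArg Prod.fst h) (.inl i)
  have h2 := fun i => congrFun (congrArg Prod.fst h) (.inr i)
  have h3 := fun i => congrFun (congrArg Prod.snd h) (.inl i)
  have h4 := fun i => congrFun (congrArg Prod.snd h) (.inr i)
  exact ⟨Prod.ext (a1.eq_of_scale ha'.1 (by positivity) h1)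
      (a2.eq_of_scale ha'.2.1 (by positivity) h4),
    Prod.ext (b1.eq_of_scale hb'.1 (by positivity) h3)
      (b2.eq_of_scale hb'.2.1 (by positivity) h2)⟩

theorem bmix_ne_emb1 {n : ℕ} {R C : Fin n → Fin n → ℝ} (hR : PosM R)
    (hC : PosM (fun i j => C j i))
    {a b c : (Fin n → ℝ) × (Fin n → ℝ)} (ha : IsNash R C a.1 a.2) (hb : IsNash R C b.1 b.2)
    (h : bmix R C a b = emb1 c) : False := by
  obtain ⟨a1, a2, ar, ac, -, -⟩ := nash_data hR hC ha
  obtain ⟨b1, b2, br, bc, -, -⟩ := nash_data hR hC hb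
  exact b2.not_zero (by positivity) fun i => congrFun (congrArg Prod.fst h) (.inr i)

theorem bmix_ne_emb2 {n : ℕ} {R C : Fin n → Fin n → ℝ} (hR : PosM R)
    (hC : PosM (fun i j => C j i))
    {a b c : (Fin n → ℝ) × (Fin n → ℝ)} (ha : IsNash R C a.1 a.2) (hb : IsNash R C b.1 b.2)
    (h : bmix R C a b = emb2 c) : False := by
  obtain ⟨a1, a2, ar, ac, -, -⟩ := nash_data hR hC ha
  obtain ⟨b1, b2, br, bc, -, -⟩ := nash_data hR hC hb
  exact a1.not_zero (by positivity) fun i => congrFun (congrArg Prod.fst h) (.inl i)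

theorem emb1_ne_emb2 {n : ℕ} {a c : (Fin n → ℝ) × (Fin n → ℝ)} (ha : IsDist a.1)
    (h : emb1 a = emb2 c) : False :=
  ha.not_zero one_pos fun i => by
    rw [one_mul]; exact congrFun (congrArg Prod.fst h) (.inl i)

theorem emb1_inj {n : ℕ} {a c : (Fin n → ℝ) × (Fin n → ℝ)} (h : emb1 a = emb1 c) : a = c :=
  Prod.ext (funext fun i => congrFun (congrArg Prod.fst h) (.inl i))
    (funext fun i => congrFun (congrArg Prod.snd h) (.inr i))

theorem emb2_inj {n : ℕ} {a c : (Fin n → ℝ) × (Fin n → ℝ)} (h : emb2 a = emb2 c) : a = c :=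
  Prod.ext (funext fun i => congrFun (congrArg Prod.snd h) (.inl i))
    (funext fun i => congrFun (congrArg Prod.fst h) (.inr i))


/-- If a win-lose bimatrix game `⟨R, C⟩` with the positive utility property has a finite
set of Nash equilibria of cardinality `m`, then its GHR-symmetrization has a finite set
of Nash equilibria, of cardinality exactly `m·(m + 2)`. -/
theorem ghr_nash_count {n m : ℕ}
    (R C : Fin n → Fin n → ℝ) (hR : WinLose R) (hC : WinLose C)
    (pupR : ∀ s₂, ∃ s₁, 0 < R s₁ s₂) (pupC : ∀ s₁, ∃ s₂, 0 < C s₁ s₂)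
    (hfin : {p : (Fin n → ℝ) × (Fin n → ℝ) | IsNash R C p.1 p.2}.Finite)
    (hcard : {p : (Fin n → ℝ) × (Fin n → ℝ) | IsNash R C p.1 p.2}.ncard = m) :
    {q : ((Fin n ⊕ Fin n) → ℝ) × ((Fin n ⊕ Fin n) → ℝ) |
        IsNash (ghrS R C) (ghrST R C) q.1 q.2}.Finite ∧
    {q : ((Fin n ⊕ Fin n) → ℝ) × ((Fin n ⊕ Fin n) → ℝ) |
        IsNash (ghrS R C) (ghrST R C) q.1 q.2}.ncard = m * (m + 2) := by
  have pR : PosM R := ⟨fun i j => by rcases hR i j with h | h <;> simp [h], pupR⟩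
  have pC : PosM (fun i j => C j i) :=
    ⟨fun i j => by rcases hC j i with h | h <;> simp [h], pupC⟩
  set A := {p : (Fin n → ℝ) × (Fin n → ℝ) | IsNash R C p.1 p.2} with hA
  set B := {q : ((Fin n ⊕ Fin n) → ℝ) × ((Fin n ⊕ Fin n) → ℝ) |
        IsNash (ghrS R C) (ghrST R C) q.1 q.2} with hB
  let F : (A × A) ⊕ (A ⊕ A) → B
    | .inl ab => ⟨bmix R C ab.1.1 ab.2.1, bmix_nash pR pC ab.1.2 ab.2.2⟩
    | .inr (.inl a) => ⟨emb1 a.1, emb1_nash pR pC a.2⟩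
    | .inr (.inr a) => ⟨emb2 a.1, emb2_nash pR pC a.2⟩
  have hF : Function.Bijective F := by
    constructor
    · rintro (⟨a, b⟩ | a | a) (⟨a', b'⟩ | c | c) h <;> have h := congrArg Subtype.val h
      · obtain ⟨h1, h2⟩ := bmix_inj pR pC a.2 b.2 a'.2 b'.2 h
        rw [Subtype.ext h1, Subtype.ext h2]
      · exact (bmix_ne_emb1 pR pC a.2 b.2 h).elim
      · exact (bmix_ne_emb2 pR pC a.2 b.2 h).elim
      · exact (bmix_ne_emb1 pR pC a'.2 b'.2 h.symm).elim
      · rw [Subtype.ext (emb1_inj h)]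
      · exact (emb1_ne_emb2 a.2.1 h).elim
      · exact (bmix_ne_emb2 pR pC a'.2 b'.2 h.symm).elim
      · exact (emb1_ne_emb2 c.2.1 h.symm).elim
      · rw [Subtype.ext (emb2_inj h)]
    · rintro ⟨⟨p, q⟩, hpq⟩
      rcases ghr_surj pR pC p q hpq with ⟨a, b, ha, hb, h⟩ | ⟨a, ha, h⟩ | ⟨a, ha, h⟩
      · exact ⟨.inl (⟨a, ha⟩, ⟨b, hb⟩), Subtype.ext h⟩
      · exact ⟨.inr (.inl ⟨a, ha⟩), Subtype.ext h⟩
      · exact ⟨.inr (.inr ⟨a, ha⟩), Subtype.ext h⟩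
  have : Finite A := hfin
  refine ⟨Finite.of_surjective F hF.2, ?_⟩
  have hc : Nat.card A = m := hcard
  have := Nat.card_congr (Equiv.ofBijective F hF)
  rw [Nat.card_sum, Nat.card_sum, Nat.card_prod, hc] at this
  change Nat.card B = _
  rw [← this]; ring
end

section
/- For the win-lose game G = G(Ĝ, φ) constructed from an r-player win-lose game Ĝ with the positive utility property and a 3SAT formula φ with n ≥ 4 variables: every Nash equilibrium σ of G that is not a Nash equilibrium of Ĝ satisfies: (i) there is an assignment γ(σ) for φ, i.e. a choice for each j ∈ {0,…,n−1} of exactly one literal from {ℓ_j, ℓ̄_j}, such that for each special player i ∈ {1,2}, σ_i is the uniform distribution on the n literals of γ(σ), each played with probability 1/n; (ii) U_1(σ) = U_2(σ) = 2/n; and (iii) every player i ∈ {3,…,r} plays δ with probability 1. -/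
open Finset

/-- Expected utility of player `i` in the mixed profile `σ`. -/
noncomputable def EU {ι : Type*} [Fintype ι] [DecidableEq ι] {S : ι → Type*}
    [∀ i, Fintype (S i)] (U : (i : ι) → (∀ j, S j) → ℝ)
    (σ : ∀ j, S j → ℝ) (i : ι) : ℝ :=
  ∑ s : ∀ j, S j, (∏ j, σ j (s j)) * U i s

/-- `σ` is a (mixed) Nash equilibrium of the game with utilities `U`. -/
def IsNashEq {ι : Type*} [Fintype ι] [DecidableEq ι] {S : ι → Type*} [∀ i, Fintype (S i)]
    (U : (i : ι) → (∀ j, S j) → ℝ) (σ : ∀ j, S j → ℝ) : Prop :=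
  (∀ i, IsDist (σ i)) ∧
    ∀ (i : ι) (τ : S i → ℝ), IsDist τ →
      EU U (Function.update σ i τ) i ≤ EU U σ i

/-! ## The player and strategy sets of the game `G(Ĝ, φ)` -/

/-- The players: the two special players (`Sum.inl`), plus `k` further players. -/
abbrev Player (k : ℕ) : Type := Fin 2 ⊕ Fin k

/-- A literal `ℓ_j` (second component `true`) or `ℓ̄_j` (second component `false`). -/
abbrev Lit (n : ℕ) : Type := Fin n × Bool

/-- A pair variable `v_{j,k}` with `j ≠ k`. -/
abbrev PairVar (n : ℕ) : Type := {p : Fin n × Fin n // p.1 ≠ p.2}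

/-- The non-gadget strategies of a special player: literals, clauses and pair variables. -/
abbrev SpecialAux (n m : ℕ) : Type := Lit n ⊕ (Fin m ⊕ PairVar n)

/-- The strategy set of each player of `G(Ĝ, φ)`: gadget strategies together with the
literals, clauses and pair variables (for the special players), resp. the single extra
strategy `δ` (for the non-special players). -/
def Strat {k : ℕ} (Shat : Player k → Type) (n m : ℕ) : Player k → Type
  | .inl p => Shat (.inl p) ⊕ SpecialAux n m
  | .inr q => Shat (.inr q) ⊕ PUnit

instance {k n m : ℕ} (Shat : Player k → Type) [∀ i, Fintype (Shat i)]
    (i : Player k) : Fintype (Strat Shat n m i) := by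
  cases i with
  | inl p => exact inferInstanceAs (Fintype (Shat (.inl p) ⊕ SpecialAux n m))
  | inr q => exact inferInstanceAs (Fintype (Shat (.inr q) ⊕ PUnit))

/-- The gadget strategy underlying a strategy of `G(Ĝ, φ)`, if any. -/
def toGadget {k n m : ℕ} (Shat : Player k → Type) :
    ∀ i : Player k, Strat Shat n m i → Option (Shat i)
  | .inl _, .inl a => some a
  | .inl _, .inr _ => none
  | .inr _, .inl a => some a
  | .inr _, .inr _ => none

/-- The strategy chosen by the special player `q` in the profile `s`. -/
def specialOf {k n m : ℕ} (Shat : Player k → Type) (q : Fin 2)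
    (s : ∀ j, Strat Shat n m j) : Shat (.inl q) ⊕ SpecialAux n m :=
  s (.inl q)

/-- The other special player. -/
def otherP : Fin 2 → Fin 2 := fun p => if p = 0 then 1 else 0

/-- Whether a strategy of a special player lies in `{ℓ₀, ℓ̄₀, ℓ₁, ℓ̄₁} ∪ 𝒞 ∪ V`
(Case (10) of the utility table). -/
def allowedB {n m : ℕ} {α : Type*} : α ⊕ SpecialAux n m → Bool
  | .inl _ => false
  | .inr (.inl l) => decide (l.1.val ≤ 1)
  | .inr (.inr _) => true

/-- Utilities ⟨player 1, player 2, each non-special player⟩ in a profile in which the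
special players choose the non-gadget strategies `a₁`, `a₂` and every non-special player
chooses `δ` (Cases (1)–(6) and part of Case (11) of the utility table).  The cyclic
difference `I(ℓ′) − I(ℓ)` is computed as `(I(ℓ′) + n − I(ℓ)) % n`. -/
noncomputable def pairU {n m : ℕ} (Cl : Fin m → Finset (Lit n)) :
    SpecialAux n m → SpecialAux n m → ℝ × ℝ × ℝ
  | .inl l, .inl l' =>
      if l' = (l.1, !l.2) then (0, 0, 1)
      else if (l'.1.val + n - l.1.val) % n ≤ 1 then (1, 0, 1)
      else if (l'.1.val + n - l.1.val) % n ≤ 3 then (0, 1, 1)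
      else (0, 0, 1)
  | .inl l, .inr (.inl c) => if (l.1, !l.2) ∈ Cl c then (0, 1, 1) else (0, 0, 0)
  | .inl l, .inr (.inr v) => if l.1 = v.1.1 ∨ l.1 = v.1.2 then (0, 1, 1) else (0, 0, 0)
  | .inr (.inl c), .inl l => if (l.1, !l.2) ∈ Cl c then (1, 0, 1) else (0, 0, 0)
  | .inr (.inr v), .inl l => if l.1 = v.1.1 ∨ l.1 = v.1.2 then (1, 0, 1) else (0, 0, 0)
  | .inr _, .inr _ => (0, 0, 0)

/-- The utility function of the game `G(Ĝ, φ)`, following Cases (1)–(11) of the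
utility table. -/
noncomputable def BigU {k n m : ℕ} (Shat : Player k → Type) [∀ i, Fintype (Shat i)]
    (Uhat : (i : Player k) → (∀ j, Shat j) → ℝ) (Cl : Fin m → Finset (Lit n))
    (i : Player k) (s : ∀ j, Strat Shat n m j) : ℝ :=
  -- Case (7): all players choose gadget strategies
  if h : ∀ j, (toGadget Shat j (s j)).isSome = true then
    Uhat i (fun j => (toGadget Shat j (s j)).get (h j))
  -- Case (8): at least two, but not all, players choose gadget strategies
  else if 1 < (univ.filter fun j => (toGadget Shat j (s j)).isSome = true).card then
    if (toGadget Shat i (s i)).isSome then 1 else 0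
  -- Cases (9), (10), (11): exactly one player chooses a gadget strategy
  else if (univ.filter fun j => (toGadget Shat j (s j)).isSome = true).card = 1 then
    if (toGadget Shat i (s i)).isSome then
      match i with
      | .inl p => if allowedB (specialOf Shat (otherP p) s) then 1 else 0
      | .inr _ => 1
    else 0
  -- Cases (1)–(6), (11): no player chooses a gadget strategy, so every non-special
  -- player chooses `δ` and the special players choose non-gadget strategies
  else
    match specialOf Shat 0 s, specialOf Shat 1 s with
    | .inr a₁, .inr a₂ =>
        (match i with
         | .inl p => if p = 0 then (pairU Cl a₁ a₂).1 else (pairU Cl a₁ a₂).2.1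
         | .inr _ => (pairU Cl a₁ a₂).2.2)
    | _, _ => 0

/-- A mixed profile of the gadget game `Ĝ`, regarded as a mixed profile of `G(Ĝ, φ)`
via the inclusions `Σ̂ᵢ ⊆ Σᵢ`. -/
def liftProfile {k n m : ℕ} (Shat : Player k → Type)
    (σh : ∀ i, Shat i → ℝ) : ∀ i, Strat Shat n m i → ℝ
  | .inl p => Sum.elim (σh (.inl p)) (fun _ => 0)
  | .inr q => Sum.elim (σh (.inr q)) (fun _ => 0)

/-- The strategy "literal `(j, b)`" of the special player `p`. -/
def litStrat {k n m : ℕ} (Shat : Player k → Type) (p : Fin 2) (j : Fin n) (b : Bool) :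
    Strat Shat n m (Sum.inl p) :=
  Sum.inr (Sum.inl (j, b))

/-- The strategy `δ` of the non-special player `q`. -/
def deltaStrat {k n m : ℕ} (Shat : Player k → Type) (q : Fin k) :
    Strat Shat n m (Sum.inr q) :=
  Sum.inr PUnit.unit

/-- The assignment `γ` satisfies the 3SAT formula with clauses `Cl`. -/
def Satisfies {n m : ℕ} (Cl : Fin m → Finset (Lit n)) (γ : Fin n → Bool) : Prop :=
  ∀ c, ∃ l ∈ Cl c, γ l.1 = l.2

/-! ## General facts on games -/

/-- Deviation payoff. -/
noncomputable def DV {ι : Type*} [Fintype ι] [DecidableEq ι] {S : ι → Type*}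
    [∀ i, Fintype (S i)] (U : (i : ι) → (∀ j, S j) → ℝ)
    (σ : ∀ j, S j → ℝ) (i : ι) (t : S i) : ℝ :=
  ∑ s : ∀ j, S j, (∏ j, σ j (s j)) * U i (Function.update s i t)

theorem EU_update {ι : Type*} [Fintype ι] [DecidableEq ι] {S : ι → Type*}
    [∀ i, Fintype (S i)] (U : (i : ι) → (∀ j, S j) → ℝ)
    (σ : ∀ j, S j → ℝ) (i : ι) (h : IsDist (σ i)) (τ : S i → ℝ) :
    EU U (Function.update σ i τ) i = ∑ t, τ t * DV U σ i t := by
  have h1 : EU U (Function.update σ i τ) i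
      = ∑ x : (∀ j, S j) × S i, σ i x.2 *
        ((τ (x.1 i) * ∏ j ∈ univ.erase i, σ j (x.1 j)) * U i x.1) := by
    rw [Fintype.sum_prod_type]
    unfold EU
    refine Finset.sum_congr rfl fun s _ => ?_
    simp only []
    rw [← Finset.sum_mul, h.2, one_mul]
    congr 1
    rw [← Finset.mul_prod_erase univ _ (Finset.mem_univ i)]
    simp only [Function.update_self]
    congr 1
    refine Finset.prod_congr rfl fun j hj => ?_
    rw [Function.update_of_ne (Finset.ne_of_mem_erase hj)]
  have h2 : ∑ t, τ t * DV U σ i t = ∑ x : (∀ j, S j) × S i, τ x.2 *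
        ((σ i (x.1 i) * ∏ j ∈ univ.erase i, σ j (x.1 j)) *
          U i (Function.update x.1 i x.2)) := by
    rw [Fintype.sum_prod_type_right]
    refine Finset.sum_congr rfl fun t _ => ?_
    unfold DV
    rw [Finset.mul_sum]
    refine Finset.sum_congr rfl fun s _ => ?_
    rw [← Finset.mul_prod_erase univ _ (Finset.mem_univ i)]
  rw [h1, h2]
  refine Finset.sum_nbij' (fun x => (Function.update x.1 i x.2, x.1 i))
    (fun x => (Function.update x.1 i x.2, x.1 i)) (by simp) (by simp) (by simp) (by simp) ?_
  rintro ⟨s, t⟩ -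
  have : ∏ j ∈ univ.erase i, σ j (Function.update s i t j) = ∏ j ∈ univ.erase i, σ j (s j) := by
    refine Finset.prod_congr rfl fun j hj => ?_
    rw [Function.update_of_ne (Finset.ne_of_mem_erase hj)]
  simp only [Function.update_self, Function.update_idem, Function.update_eq_self, this]
  ring

theorem NE_dev {ι : Type*} [Fintype ι] [DecidableEq ι] {S : ι → Type*}
    [∀ i, Fintype (S i)] {U : (i : ι) → (∀ j, S j) → ℝ}
    {σ : ∀ j, S j → ℝ} (h : IsNashEq U σ) (i : ι) (t : S i) :
    DV U σ i t ≤ EU U σ i := by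
  classical
  have := h.2 i (fun t' => if t' = t then 1 else 0) ⟨fun s => by dsimp only; split_ifs <;> norm_num, by simp⟩
  rw [EU_update U σ i (h.1 i)] at this
  simpa using this

theorem NE_supp {ι : Type*} [Fintype ι] [DecidableEq ι] {S : ι → Type*}
    [∀ i, Fintype (S i)] {U : (i : ι) → (∀ j, S j) → ℝ}
    {σ : ∀ j, S j → ℝ} (h : IsNashEq U σ) (i : ι) (t : S i) (ht : 0 < σ i t) :
    DV U σ i t = EU U σ i := by
  have h1 : EU U σ i = ∑ t, σ i t * DV U σ i t := by
    rw [← EU_update U σ i (h.1 i), Function.update_eq_self]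
  have h2 : ∑ t, σ i t * (EU U σ i - DV U σ i t) = 0 := by
    simp only [mul_sub, Finset.sum_sub_distrib]
    rw [← Finset.sum_mul, (h.1 i).2, ← h1]; ring
  rw [Finset.sum_eq_zero_iff_of_nonneg] at h2
  · have := h2 t (Finset.mem_univ _)
    rcases mul_eq_zero.1 this with h3 | h3 <;> linarith
  · intro t _
    exact mul_nonneg ((h.1 i).1 t) (sub_nonneg.2 (NE_dev h i t))

theorem exists_supp {α : Type*} [Fintype α] {x : α → ℝ} (h : IsDist x) : ∃ a, 0 < x a := by
  by_contra hh
  push Not at hh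
  have := Finset.sum_nonpos (fun a (_ : a ∈ univ) => hh a)
  rw [h.2] at this
  linarith

/-! ## Cyclic core -/

theorem top_const {G : Type*} [AddCommGroup G] (e : G) (h2 : e + e ≠ 0)
    (hgen : ∀ P : G → Prop, (∀ g, P g → P (g - e)) → (∃ g, P g) → ∀ g, P g)
    (y : G → ℝ) (h : ∀ j a b, a ≠ b → y a + y b ≤ y j + y (j + e)) (i j : G) : y i = y j := by
  have key : ∀ j, y (j - e) = y j := by
    intro j
    apply le_antisymm
    · have := h j (j - e) (j + e) (fun hh => h2 (by
        have : j + e - (j - e) = 0 := by rw [hh]; abel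
        rw [← this]; abel))
      linarith
    · have := h (j - e - e) (j - e - e) j (fun hh => h2 (by
        have : j - (j - e - e) = 0 := by rw [hh]; abel
        rw [← this]; abel))
      rw [show j - e - e + e = j - e by abel] at this
      linarith
  exact hgen (fun g => y g = y j) (fun g hg => by rw [key]; exact hg) ⟨j, rfl⟩ i

theorem cyc {G : Type*} [AddCommGroup G] (e : G) (h1 : e ≠ 0) (h2 : e + e ≠ 0)
    (h3 : e + e + e ≠ 0)
    (hgen : ∀ P : G → Prop, (∀ g, P g → P (g - e)) → (∃ g, P g) → ∀ g, P g)
    (x y : G → ℝ) (x0 : ∀ j, 0 ≤ x j) (y0 : ∀ j, 0 ≤ y j)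
    (hx : ∃ j, 0 < x j) (hy : ∃ j, 0 < y j)
    (hX : ∀ j, 0 < x j → ∀ a b, a ≠ b → y a + y b ≤ y j + y (j + e))
    (hY : ∀ j, 0 < y j → ∀ a b, a ≠ b → x a + x b ≤ x (j - e - e) + x (j - e - e - e)) :
    (∀ j, 0 < x j) ∧ (∀ j, 0 < y j) ∧ (∀ i j, x i = x j) ∧ (∀ i j, y i = y j) := by
  have ne_of : ∀ (a b c : G), c ≠ 0 → b - a = c → a ≠ b := by
    rintro a b c hc h rfl
    exact hc (by rw [← h]; abel)
  -- supports are not singletons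
  have posY : ∀ j, 0 < y j → 0 < x (j - e - e) ∨ 0 < x (j - e - e - e) := by
    intro j hj
    obtain ⟨a, ha⟩ := hx
    have := hY j hj a (a + e) (ne_of _ _ e h1 (by abel))
    by_contra! hh
    linarith [x0 (a + e)]
  have posX : ∀ j, 0 < x j → 0 < y j ∨ 0 < y (j + e) := by
    intro j hj
    obtain ⟨a, ha⟩ := hy
    have := hX j hj a (a + e) (ne_of _ _ e h1 (by abel))
    by_contra! hh
    linarith [y0 (a + e)]
  have nsY : ∀ g, 0 < y g → ¬ ∀ a, a ≠ g → y a = 0 := by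
    intro g hg hh
    rcases posY g hg with h | h
    · rcases posX _ h with h' | h'
      · exact h'.ne' (hh _ (ne_of _ _ (e+e) h2 (by abel)))
      · exact h'.ne' (hh _ (ne_of _ _ (e) h1 (by abel)))
    · rcases posX _ h with h' | h'
      · exact h'.ne' (hh _ (ne_of _ _ (e+e+e) h3 (by abel)))
      · exact h'.ne' (hh _ (ne_of _ _ (e+e) h2 (by abel)))
  have nsX : ∀ g, 0 < x g → ¬ ∀ a, a ≠ g → x a = 0 := by
    intro g hg hh
    rcases posX g hg with h | h
    · rcases posY _ h with h' | h'
      · exact h'.ne' (hh _ (ne_of _ _ (e+e) h2 (by abel)))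
      · exact h'.ne' (hh _ (ne_of _ _ (e+e+e) h3 (by abel)))
    · rcases posY _ h with h' | h'
      · exact h'.ne' (hh _ (ne_of _ _ (e) h1 (by abel)))
      · exact h'.ne' (hh _ (ne_of _ _ (e+e) h2 (by abel)))
  have bothX : ∀ j, 0 < x j → 0 < y j ∧ 0 < y (j + e) := by
    intro j hj
    by_contra hcon
    rcases posX j hj with h | h
    · refine nsY j h fun a ha => ?_
      have h4 : y (j + e) = 0 := le_antisymm (not_lt.1 fun h' => hcon ⟨h, h'⟩) (y0 _)
      have := hX j hj a j ha
      linarith [y0 a]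
    · refine nsY _ h fun a ha => ?_
      have h4 : y j = 0 := le_antisymm (not_lt.1 fun h' => hcon ⟨h', h⟩) (y0 _)
      have := hX j hj a _ ha
      linarith [y0 a]
  have bothY : ∀ j, 0 < y j → 0 < x (j - e - e) ∧ 0 < x (j - e - e - e) := by
    intro j hj
    by_contra hcon
    rcases posY j hj with h | h
    · refine nsX _ h fun a ha => ?_
      have h4 : x (j - e - e - e) = 0 := le_antisymm (not_lt.1 fun h' => hcon ⟨h, h'⟩) (x0 _)
      have := hY j hj a _ ha
      linarith [x0 a]
    · refine nsX _ h fun a ha => ?_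
      have h4 : x (j - e - e) = 0 := le_antisymm (not_lt.1 fun h' => hcon ⟨h', h⟩) (x0 _)
      have := hY j hj a _ ha
      linarith [x0 a]
  have allX : ∀ j, 0 < x j := hgen _ (fun g hg => by
    have := (bothY _ (bothX g hg).2).1
    rwa [show g + e - e - e = g - e by abel] at this) hx
  have allY : ∀ j, 0 < y j := fun j => (bothX j (allX j)).1
  refine ⟨allX, allY, ?_, ?_⟩
  · refine top_const e h2 hgen x fun j a b hab => ?_
    have := hY (j + e + e + e) (allY _) a b hab
    rw [show j + e + e + e - e - e - e = j by abel, show j + e + e + e - e - e = j + e by abel]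
      at this
    linarith
  · exact top_const e h2 hgen y fun j a b hab => hX j (allX j) a b hab

/-! ## The literal game -/

/-- Numerical version of the allowed set. -/
noncomputable def al {n m : ℕ} : SpecialAux n m → ℝ
  | .inl l => if l.1.val ≤ 1 then 1 else 0
  | .inr _ => 1

theorem grp2 {G : Type*} [AddCommGroup G] (a b e : G) : a = b - e - e ↔ b - a = e + e := by
  constructor
  · rintro rfl; abel
  · intro h
    rw [show a = b - (b - a) by abel, h]; abel

theorem grp3 {G : Type*} [AddCommGroup G] (a b e : G) :
    a = b - e - e - e ↔ b - a = e + e + e := by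
  constructor
  · rintro rfl; abel
  · intro h
    rw [show a = b - (b - a) by abel, h]; abel

theorem fin_gen {n : ℕ} (P : Fin (n + 4) → Prop) (h : ∀ g, P g → P (g - 1)) (h0 : ∃ g, P g)
    (g : Fin (n + 4)) : P g := by
  obtain ⟨g0, h0⟩ := h0
  have key : ∀ d : Fin (n + 4), P (g0 - d) := by
    intro d
    induction d using Fin.induction with
    | zero => simpa using h0
    | succ i ih =>
      have := h _ ih
      rw [← Fin.coeSucc_eq_succ, ← sub_sub]
      exact this
  simpa using key (g0 - g)

theorem fin_diff {n : ℕ} (a b : Fin (n + 4)) :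
    (b.val + (n + 4) - a.val) % (n + 4) = (b - a).val := by
  rw [Fin.val_sub]
  congr 1
  omega

theorem v1 {n : ℕ} : (1 : Fin (n + 4)).val = 1 := by simp
theorem v2 {n : ℕ} : (1 + 1 : Fin (n + 4)).val = 2 := by
  rw [Fin.val_add, v1]; apply Nat.mod_eq_of_lt; omega
theorem v3 {n : ℕ} : (1 + 1 + 1 : Fin (n + 4)).val = 3 := by
  rw [Fin.val_add, v2, v1]; apply Nat.mod_eq_of_lt; omega

theorem fin_le1 {n : ℕ} (a b : Fin (n + 4)) :
    (b.val + (n + 4) - a.val) % (n + 4) ≤ 1 ↔ b = a ∨ b = a + 1 := by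
  rw [fin_diff]
  have h1 : (b = a) ↔ (b - a).val = 0 := by
    rw [← sub_eq_zero, Fin.ext_iff]; rfl
  have h2 : (b = a + 1) ↔ (b - a).val = 1 := by
    have := Fin.ext_iff (a := b - a) (b := 1)
    rw [v1] at this
    rw [← this, sub_eq_iff_eq_add']
  rw [h1, h2]; omega

theorem fin_23 {n : ℕ} (a b : Fin (n + 4)) :
    (¬ (b.val + (n + 4) - a.val) % (n + 4) ≤ 1 ∧ (b.val + (n + 4) - a.val) % (n + 4) ≤ 3) ↔
      a = b - 1 - 1 ∨ a = b - 1 - 1 - 1 := by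
  rw [fin_diff]
  have h1 : (a = b - 1 - 1) ↔ (b - a).val = 2 := by
    have := Fin.ext_iff (a := b - a) (b := 1 + 1)
    rw [v2] at this
    rw [← this, grp2]
  have h2 : (a = b - 1 - 1 - 1) ↔ (b - a).val = 3 := by
    have := Fin.ext_iff (a := b - a) (b := 1 + 1 + 1)
    rw [v3] at this
    rw [← this, grp3]
  rw [h1, h2]; omega

theorem one_ne {n : ℕ} : (1 : Fin (n + 4)) ≠ 0 := by
  intro h; have := congrArg Fin.val h; rw [v1] at this; simp at this
theorem two_ne {n : ℕ} : (1 + 1 : Fin (n + 4)) ≠ 0 := by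
  intro h; have := congrArg Fin.val h; rw [v2] at this; simp at this
theorem three_ne {n : ℕ} : (1 + 1 + 1 : Fin (n + 4)) ≠ 0 := by
  intro h; have := congrArg Fin.val h; rw [v3] at this; simp at this

theorem pair1 {n m : ℕ} (Cl : Fin m → Finset (Lit (n + 4))) (l l' : Lit (n + 4)) :
    (pairU Cl (.inl l) (.inl l')).1 =
      (if l' = l then 1 else 0) + (if l'.1 = l.1 + 1 then 1 else 0) := by
  obtain ⟨j, b⟩ := l
  obtain ⟨j', b'⟩ := l'
  have hj : j ≠ j + 1 := fun h => one_ne (n := n) (by simpa using h)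
  simp only [pairU, fin_le1, Prod.mk.injEq]
  by_cases h1 : j' = j
  · subst h1
    cases b <;> cases b' <;> simp [hj]
  · by_cases h2 : j' = j + 1
    · simp [h1, h2, hj.symm]
    · simp only [h1, h2, false_and, or_self, if_false]
      split_ifs <;> simp

theorem pair2 {n m : ℕ} (Cl : Fin m → Finset (Lit (n + 4))) (l l' : Lit (n + 4)) :
    (pairU Cl (.inl l) (.inl l')).2.1 =
      (if l.1 = l'.1 - 1 - 1 then 1 else 0) + (if l.1 = l'.1 - 1 - 1 - 1 then 1 else 0) := by
  obtain ⟨j, b⟩ := l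
  obtain ⟨j', b'⟩ := l'
  have hj : j' ≠ j' - 1 - 1 := fun h => two_ne (n := n) (by
    rw [grp2, sub_self] at h; exact h.symm)
  have hj3 : j' ≠ j' - 1 - 1 - 1 := fun h => three_ne (n := n) (by
    rw [grp3, sub_self] at h; exact h.symm)
  have hj4 : j' - 1 - 1 ≠ j' - 1 - 1 - 1 := fun h => one_ne (n := n) (by
    have h5 := sub_eq_self.1 h.symm
    exact h5)
  have key := fin_23 j j'
  simp only [pairU, Prod.mk.injEq]
  by_cases h1 : j' = j
  · subst h1
    simp only [fin_le1]
    cases b <;> cases b' <;> simp [hj, hj3]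
  · simp only [h1, false_and, if_false]
    by_cases h2 : j = j' - 1 - 1
    · have := key.2 (Or.inl h2)
      rw [if_neg this.1, if_pos this.2, if_pos h2, if_neg (h2 ▸ hj4)]; simp
    · by_cases h3 : j = j' - 1 - 1 - 1
      · have := key.2 (Or.inr h3)
        rw [if_neg this.1, if_pos this.2, if_pos h3, if_neg h2]; simp
      · rw [if_neg h2, if_neg h3]
        have := mt key.1 (by simp [h2, h3])
        split_ifs with h4 h5
        · simp
        · exact absurd ⟨h4, h5⟩ this
        · simp

/-- Mass at an index. -/
noncomputable def idx {n m : ℕ} (Y : SpecialAux n m → ℝ) (j : Fin n) : ℝ :=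
  Y (.inl (j, true)) + Y (.inl (j, false))

theorem sum_aux {n m : ℕ} (f : SpecialAux n m → ℝ) :
    ∑ b, f b = ∑ j, idx f j + ∑ b, f (.inr b) := by
  rw [Fintype.sum_sum_type, Fintype.sum_prod_type]
  simp [idx]

theorem R1_lit {n m : ℕ} (Cl : Fin m → Finset (Lit (n + 4))) (Y : SpecialAux (n + 4) m → ℝ)
    (l : Lit (n + 4)) :
    ∑ b, Y b * (pairU Cl (.inl l) b).1 = Y (.inl l) + idx Y (l.1 + 1) := by
  rw [Fintype.sum_sum_type]
  have : ∑ x, Y (.inr x) * (pairU Cl (.inl l) (.inr x)).1 = 0 := by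
    refine Finset.sum_eq_zero fun x _ => ?_
    rcases x with c | v <;> simp only [pairU] <;> split_ifs <;> simp
  rw [this]
  simp only [pair1, mul_add, Finset.sum_add_distrib]
  simp only [mul_ite, mul_one, mul_zero, Finset.sum_ite_eq', Finset.mem_univ, if_true, add_zero]
  congr 1
  rw [Fintype.sum_prod_type]
  simp [idx, Finset.sum_add_distrib]

theorem R2_lit {n m : ℕ} (Cl : Fin m → Finset (Lit (n + 4))) (X : SpecialAux (n + 4) m → ℝ)
    (l : Lit (n + 4)) :
    ∑ b, X b * (pairU Cl b (.inl l)).2.1 = idx X (l.1 - 1 - 1) + idx X (l.1 - 1 - 1 - 1) := by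
  rw [Fintype.sum_sum_type]
  have : ∑ x, X (.inr x) * (pairU Cl (.inr x) (.inl l)).2.1 = 0 := by
    refine Finset.sum_eq_zero fun x _ => ?_
    rcases x with c | v <;> simp only [pairU] <;> split_ifs <;> simp
  rw [this]
  simp only [pair2, mul_add, Finset.sum_add_distrib]
  simp only [mul_ite, mul_one, mul_zero, add_zero]
  rw [Fintype.sum_prod_type, Fintype.sum_prod_type]
  simp [idx, Finset.sum_add_distrib]

theorem R_var_aux {n m : ℕ} (Y : SpecialAux n m → ℝ) (v : PairVar n) :
    ∑ l : Lit n, Y (.inl l) * (if l.1 = v.1.1 ∨ l.1 = v.1.2 then 1 else 0) =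
      idx Y v.1.1 + idx Y v.1.2 := by
  have : ∀ l : Lit n, (if l.1 = v.1.1 ∨ l.1 = v.1.2 then (1 : ℝ) else 0) =
      (if l.1 = v.1.1 then 1 else 0) + (if l.1 = v.1.2 then 1 else 0) := by
    intro l
    have := v.2
    by_cases h1 : l.1 = v.1.1 <;> by_cases h2 : l.1 = v.1.2 <;> simp [h1, h2]
    all_goals grind
  simp only [this, mul_add, Finset.sum_add_distrib]
  simp only [mul_ite, mul_one, mul_zero, add_zero]
  rw [Fintype.sum_prod_type, Fintype.sum_prod_type]
  simp [idx, Finset.sum_add_distrib]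

theorem R1_var {n m : ℕ} (Cl : Fin m → Finset (Lit n)) (Y : SpecialAux n m → ℝ)
    (v : PairVar n) :
    ∑ b, Y b * (pairU Cl (.inr (.inr v)) b).1 = idx Y v.1.1 + idx Y v.1.2 := by
  rw [Fintype.sum_sum_type, ← R_var_aux]
  have : ∑ x, Y (.inr x) * (pairU Cl (.inr (.inr v)) (.inr x)).1 = 0 := by
    refine Finset.sum_eq_zero fun x _ => ?_
    rcases x with c | v <;> simp [pairU]
  rw [this, add_zero]
  refine Finset.sum_congr rfl fun l _ => ?_
  simp only [pairU]
  split_ifs <;> simp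

theorem R2_var {n m : ℕ} (Cl : Fin m → Finset (Lit n)) (Y : SpecialAux n m → ℝ)
    (v : PairVar n) :
    ∑ b, Y b * (pairU Cl b (.inr (.inr v))).2.1 = idx Y v.1.1 + idx Y v.1.2 := by
  rw [Fintype.sum_sum_type, ← R_var_aux]
  have : ∑ x, Y (.inr x) * (pairU Cl (.inr x) (.inr (.inr v))).2.1 = 0 := by
    refine Finset.sum_eq_zero fun x _ => ?_
    rcases x with c | v <;> simp [pairU]
  rw [this, add_zero]
  refine Finset.sum_congr rfl fun l _ => ?_
  simp only [pairU]
  split_ifs <;> simp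

theorem R1_zero {n m : ℕ} (Cl : Fin m → Finset (Lit n)) (Y : SpecialAux n m → ℝ)
    (h : ∀ l, Y (.inl l) = 0) (c : SpecialAux n m) : ∑ b, Y b * (pairU Cl c b).1 = 0 := by
  refine Finset.sum_eq_zero fun x _ => ?_
  rcases x with l | c' | v
  · simp [h]
  · rcases c with l | c | v <;> simp only [pairU] <;> try split_ifs
    all_goals simp
  · rcases c with l | c | v <;> simp only [pairU] <;> try split_ifs
    all_goals simp

theorem R2_zero {n m : ℕ} (Cl : Fin m → Finset (Lit n)) (Y : SpecialAux n m → ℝ)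
    (h : ∀ l, Y (.inl l) = 0) (c : SpecialAux n m) : ∑ b, Y b * (pairU Cl b c).2.1 = 0 := by
  refine Finset.sum_eq_zero fun x _ => ?_
  rcases x with l | c' | v
  · simp [h]
  · rcases c with l | c | v <;> simp only [pairU] <;> try split_ifs
    all_goals simp
  · rcases c with l | c | v <;> simp only [pairU] <;> try split_ifs
    all_goals simp

theorem al_sum {n m : ℕ} (Y : SpecialAux (n + 4) m → ℝ) :
    ∑ b, Y b * al b = idx Y 0 + idx Y 1 + ∑ b, Y (.inr b) := by
  rw [sum_aux]
  have h0 : ∀ j : Fin (n + 4), idx (fun b => Y b * al b) j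
      = (if j = 0 then idx Y j else 0) + (if j = 1 then idx Y j else 0) := by
    intro j
    have e0 : j = 0 ↔ j.val = 0 := by rw [Fin.ext_iff]; rfl
    have e1 : j = 1 ↔ j.val = 1 := by rw [Fin.ext_iff, v1]
    simp only [idx, al, e0, e1]
    by_cases h : j.val = 0
    · simp [h]
    · by_cases h' : j.val = 1
      · simp [h']
      · have : ¬ j.val ≤ 1 := by omega
        simp [h, h', this]
  simp only [h0, Finset.sum_add_distrib]
  simp [al]

theorem core {n m : ℕ} (hn : 4 ≤ n) (Cl : Fin m → Finset (Lit n)) (X Y : SpecialAux n m → ℝ)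
    (X0 : ∀ c, 0 ≤ X c) (Y0 : ∀ c, 0 ≤ Y c) (hX : ∃ c, 0 < X c) (hY : ∃ c, 0 < Y c)
    (h1 : ∀ c, 0 < X c → ∀ c', ∑ b, Y b * (pairU Cl c' b).1 ≤ ∑ b, Y b * (pairU Cl c b).1)
    (h2 : ∀ c, 0 < Y c → ∀ c', ∑ b, X b * (pairU Cl b c').2.1 ≤ ∑ b, X b * (pairU Cl b c).2.1)
    (a1 : ∀ c, 0 < X c → ∑ b, Y b * al b ≤ ∑ b, Y b * (pairU Cl c b).1)
    (a2 : ∀ c, 0 < Y c → ∑ b, X b * al b ≤ ∑ b, X b * (pairU Cl b c).2.1) :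
    ∃ γ : Fin n → Bool,
      (∀ j, X (.inl (j, γ j)) = (∑ b, X b) / n) ∧ (∀ j, Y (.inl (j, γ j)) = (∑ b, Y b) / n) ∧
      (∀ c, (∀ j, c ≠ .inl (j, γ j)) → X c = 0) ∧ (∀ c, (∀ j, c ≠ .inl (j, γ j)) → Y c = 0) ∧
      (∀ j, ∑ b, Y b * (pairU Cl (.inl (j, γ j)) b).1 = 2 * (∑ b, Y b) / n) ∧
      (∀ j, ∑ b, X b * (pairU Cl b (.inl (j, γ j))).2.1 = 2 * (∑ b, X b) / n) ∧
      (∑ b, Y b * al b = 2 * (∑ b, Y b) / n) ∧ (∑ b, X b * al b = 2 * (∑ b, X b) / n) := by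
  obtain ⟨n, rfl⟩ := Nat.exists_eq_add_of_le' hn
  have iX0 : ∀ j, 0 ≤ idx X j := fun j => add_nonneg (X0 _) (X0 _)
  have iY0 : ∀ j, 0 ≤ idx Y j := fun j => add_nonneg (Y0 _) (Y0 _)
  have alpos : ∀ Z : SpecialAux (n + 4) m → ℝ, (∀ c, 0 ≤ Z c) → (∃ c, 0 < Z c) →
      (∀ l, Z (.inl l) = 0) → 0 < ∑ b, Z b * al b := by
    rintro Z Z0 ⟨c, hc⟩ hz
    rw [al_sum]
    have : 0 < ∑ b, Z (.inr b) := by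
      rcases c with l | c
      · rw [hz] at hc; exact absurd hc (lt_irrefl _)
      · exact Finset.sum_pos' (fun b _ => Z0 _) ⟨c, Finset.mem_univ _, hc⟩
    have e1 : idx Z 0 = 0 := by simp [idx, hz]
    have e2 : idx Z 1 = 0 := by simp [idx, hz]
    linarith
  have posidx : ∀ Z : SpecialAux (n + 4) m → ℝ, (∀ c, 0 ≤ Z c) → ∀ l : Lit (n + 4),
      0 < Z (.inl l) → 0 < idx Z l.1 := by
    rintro Z Z0 ⟨j, b⟩ h
    have := Z0 (.inl (j, true))
    have := Z0 (.inl (j, false))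
    cases b <;> simp only [idx] <;> linarith
  have idxpos : ∀ Z : SpecialAux (n + 4) m → ℝ, (∀ c, 0 ≤ Z c) → ∀ j,
      0 < idx Z j → ∃ b, 0 < Z (.inl (j, b)) := by
    intro Z Z0 j h
    by_contra! hh
    have := hh true
    have := hh false
    simp only [idx] at h
    linarith
  have lX : ∃ j, 0 < idx X j := by
    by_contra! hh
    have hz : ∀ l, X (.inl l) = 0 := fun l =>
      le_antisymm (not_lt.1 fun h => absurd (posidx X X0 l h) (not_lt.2 (hh _))) (X0 _)
    obtain ⟨c, hc⟩ := hY
    have := a2 c hc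
    rw [R2_zero Cl X hz] at this
    linarith [alpos X X0 hX hz]
  have lY : ∃ j, 0 < idx Y j := by
    by_contra! hh
    have hz : ∀ l, Y (.inl l) = 0 := fun l =>
      le_antisymm (not_lt.1 fun h => absurd (posidx Y Y0 l h) (not_lt.2 (hh _))) (Y0 _)
    obtain ⟨c, hc⟩ := hX
    have := a1 c hc
    rw [R1_zero Cl Y hz] at this
    linarith [alpos Y Y0 hY hz]
  have sub : ∀ j b, Y (.inl (j, b)) ≤ idx Y j := by
    intro j b
    have := Y0 (.inl (j, true))
    have := Y0 (.inl (j, false))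
    cases b <;> simp only [idx] <;> linarith
  obtain ⟨px, py, cx, cy⟩ := cyc (1 : Fin (n + 4)) one_ne two_ne three_ne fin_gen (idx X) (idx Y)
    iX0 iY0 lX lY
    (fun j hj a b hab => by
      obtain ⟨β, hβ⟩ := idxpos X X0 j hj
      have := h1 _ hβ (.inr (.inr ⟨(a, b), hab⟩))
      rw [R1_var, R1_lit] at this
      have := sub j β
      simp only at *
      linarith)
    (fun j hj a b hab => by
      obtain ⟨β, hβ⟩ := idxpos Y Y0 j hj
      have := h2 _ hβ (.inr (.inr ⟨(a, b), hab⟩))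
      rw [R2_var, R2_lit] at this
      simpa using this)
  choose γ hγ using fun j => idxpos X X0 j (px j)
  have ne01 : (0 : Fin (n + 4)) ≠ 1 := fun h => one_ne h.symm
  -- opposite literals
  have opp : ∀ j b, 0 < X (.inl (j, b)) → Y (.inl (j, b)) = idx Y 0 := by
    intro j b h
    have := h1 _ h (.inr (.inr ⟨(0, 1), ne01⟩))
    rw [R1_var, R1_lit] at this
    have h' := sub j b
    rw [cy j 0] at h'
    rw [cy 1 0, cy (_ + 1) 0] at this
    simp only at *
    linarith
  have Yg : ∀ j, Y (.inl (j, γ j)) = idx Y 0 := fun j => opp j _ (hγ j)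
  have Yn : ∀ j, Y (.inl (j, !γ j)) = 0 := by
    intro j
    have h := Yg j
    have h' : idx Y j = Y (.inl (j, γ j)) + Y (.inl (j, !γ j)) := by
      cases γ j <;> simp [idx, add_comm]
    rw [cy j 0] at h'
    linarith
  have Xn : ∀ j, X (.inl (j, !γ j)) = 0 := by
    intro j
    refine le_antisymm (not_lt.1 fun h => ?_) (X0 _)
    have := opp _ _ h
    rw [Yn] at this
    linarith [py 0]
  have Xg : ∀ j, X (.inl (j, γ j)) = idx X 0 := by
    intro j
    have h' : idx X j = X (.inl (j, γ j)) + X (.inl (j, !γ j)) := by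
      cases γ j <;> simp [idx, add_comm]
    rw [cx j 0, Xn] at h'
    linarith
  have R1v : ∀ j, ∑ b, Y b * (pairU Cl (.inl (j, γ j)) b).1 = 2 * idx Y 0 := by
    intro j
    rw [R1_lit, Yg, cy (_ + 1) 0]; ring
  have R2v : ∀ j, ∑ b, X b * (pairU Cl b (.inl (j, γ j))).2.1 = 2 * idx X 0 := by
    intro j
    rw [R2_lit, cx (_ - 1 - 1) 0, cx (_ - 1) 0]; ring
  have nY : ∑ b, Y (.inr b) = 0 := by
    have := a1 _ (hγ 0)
    rw [R1v, al_sum, cy 1 0] at this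
    refine le_antisymm (by linarith) (Finset.sum_nonneg fun b _ => Y0 _)
  have nX : ∑ b, X (.inr b) = 0 := by
    have := a2 _ (show 0 < Y (.inl (0, γ 0)) by rw [Yg]; exact py 0)
    rw [R2v, al_sum, cx 1 0] at this
    refine le_antisymm (by linarith) (Finset.sum_nonneg fun b _ => X0 _)
  have sY : ∑ b, Y b = (n + 4 : ℕ) * idx Y 0 := by
    rw [sum_aux, nY, Finset.sum_congr rfl (fun j _ => cy j 0)]; simp
  have sX : ∑ b, X b = (n + 4 : ℕ) * idx X 0 := by
    rw [sum_aux, nX, Finset.sum_congr rfl (fun j _ => cx j 0)]; simp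
  have hn0 : ((n + 4 : ℕ) : ℝ) ≠ 0 := by positivity
  have zero : ∀ Z : SpecialAux (n + 4) m → ℝ, (∀ c, 0 ≤ Z c) → (∑ b, Z (.inr b) = 0) →
      (∀ j, Z (.inl (j, !γ j)) = 0) → ∀ c, (∀ j, c ≠ .inl (j, γ j)) → Z c = 0 := by
    intro Z Z0 hz hl c hc
    rcases c with ⟨j, b⟩ | c
    · have hb : b = !γ j := by
        have h5 : b ≠ γ j := fun h => hc j (by rw [h])
        revert h5
        cases b <;> cases γ j <;> simp
      rw [hb, hl]
    · exact (Finset.sum_eq_zero_iff_of_nonneg (fun b _ => Z0 _)).1 hz c (Finset.mem_univ _)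
  refine ⟨γ, ?_, ?_, zero X X0 nX Xn, zero Y Y0 nY Yn, ?_, ?_, ?_, ?_⟩
  · intro j; rw [Xg, sX]; field_simp
  · intro j; rw [Yg, sY]; field_simp
  · intro j; rw [R1v, sY]; field_simp
  · intro j; rw [R2v, sX]; field_simp
  · rw [al_sum, nY, sY, cy 1 0]; field_simp; ring
  · rw [al_sum, nX, sX, cx 1 0]; field_simp; ring

/-! ## The utility function of `G` -/

/-- Gadget inclusion. -/
def emb {k n m : ℕ} (Shat : Player k → Type) : ∀ i : Player k, Shat i → Strat Shat n m i
  | .inl _, a => Sum.inl a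
  | .inr _, a => Sum.inl a

/-- A non-gadget strategy of a special player. -/
def auxS {k n m : ℕ} (Shat : Player k → Type) (p : Fin 2) (c : SpecialAux n m) :
    Strat Shat n m (.inl p) := Sum.inr c

/-- Is a gadget strategy. -/
def Gad {k n m : ℕ} (Shat : Player k → Type) (i : Player k) (x : Strat Shat n m i) : Prop :=
  (toGadget Shat i x).isSome = true

section big

variable {k n m : ℕ} {Shat : Player k → Type}

theorem toGadget_emb (i : Player k) (a : Shat i) :
    toGadget Shat i (emb (n := n) (m := m) Shat i a) = some a := by
  cases i <;> rfl

theorem gad_emb (i : Player k) (a : Shat i) : Gad Shat i (emb (n := n) (m := m) Shat i a) := by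
  unfold Gad; rw [toGadget_emb]; rfl

theorem gad_iff (i : Player k) (x : Strat Shat n m i) : Gad Shat i x ↔ ∃ a, x = emb Shat i a := by
  constructor
  · intro h
    rcases i with p | q
    · rcases x with a | a
      · exact ⟨a, rfl⟩
      · cases h
    · rcases x with a | a
      · exact ⟨a, rfl⟩
      · cases h
  · rintro ⟨a, rfl⟩; exact gad_emb i a

theorem not_gad_aux (p : Fin 2) (c : SpecialAux n m) : ¬ Gad Shat (.inl p) (auxS Shat p c) := by
  intro h; cases h

theorem aux_of_not_gad (p : Fin 2) (x : Strat Shat n m (.inl p)) (h : ¬ Gad Shat (.inl p) x) :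
    ∃ c, x = auxS Shat p c := by
  rcases x with a | a
  · exact absurd rfl h
  · exact ⟨a, rfl⟩

theorem delta_of_not_gad (q : Fin k) (x : Strat Shat n m (.inr q)) (h : ¬ Gad Shat (.inr q) x) :
    x = deltaStrat Shat q := by
  rcases x with a | a
  · exact absurd rfl h
  · rfl

theorem sum_strat [∀ i, Fintype (Shat i)] (p : Fin 2) (f : Strat Shat n m (.inl p) → ℝ) :
    ∑ x, f x = ∑ a, f (emb Shat _ a) + ∑ c, f (auxS Shat p c) :=
  Fintype.sum_sum_type (α₁ := Shat (.inl p)) (α₂ := SpecialAux n m) f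

theorem sum_strat' [∀ i, Fintype (Shat i)] (q : Fin k) (f : Strat Shat n m (.inr q) → ℝ) :
    ∑ x, f x = ∑ a, f (emb Shat _ a) + f (deltaStrat Shat q) := by
  have := Fintype.sum_sum_type (α₁ := Shat (.inr q)) (α₂ := PUnit) f
  rw [Fintype.sum_unique (fun a₂ : PUnit => f (Sum.inr a₂))] at this
  exact this

variable [∀ i, Fintype (Shat i)] {Uhat : (i : Player k) → (∀ j, Shat j) → ℝ}
  {Cl : Fin m → Finset (Lit n)}

theorem BigU_zero {i j : Player k} {s : ∀ j, Strat Shat n m j} (hi : ¬ Gad Shat i (s i))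
    (hj : Gad Shat j (s j)) : BigU Shat Uhat Cl i s = 0 := by
  unfold Gad at hi hj
  unfold BigU
  have hc : (univ.filter fun j => (toGadget Shat j (s j)).isSome = true).card ≠ 0 :=
    Finset.card_ne_zero.2 ⟨j, by simp [hj]⟩
  rw [dif_neg (fun h => hi (h i))]
  by_cases h1 : 1 < (univ.filter fun j => (toGadget Shat j (s j)).isSome = true).card
  · rw [if_pos h1, if_neg hi]
  · rw [if_neg h1, if_pos (by omega), if_neg hi]

theorem BigU_one {i j l : Player k} {s : ∀ j, Strat Shat n m j} (hi : Gad Shat i (s i))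
    (hj : Gad Shat j (s j)) (hij : i ≠ j) (hl : ¬ Gad Shat l (s l)) :
    BigU Shat Uhat Cl i s = 1 := by
  unfold Gad at hi hj hl
  unfold BigU
  have hc : 1 < (univ.filter fun j => (toGadget Shat j (s j)).isSome = true).card :=
    Finset.one_lt_card.2 ⟨i, by simp [hi], j, by simp [hj], hij⟩
  rw [dif_neg (fun h => hl (h l)), if_pos hc, if_pos hi]

theorem otherP_ne (p : Fin 2) : otherP p ≠ p := by
  revert p; decide

theorem eq_otherP (p q : Fin 2) (h : q ≠ p) : q = otherP p := by
  revert p q; decide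

theorem BigU_single {p : Fin 2} {s : ∀ j, Strat Shat n m j} (hi : Gad Shat (.inl p) (s (.inl p)))
    (hj : ∀ j, j ≠ .inl p → ¬ Gad Shat j (s j)) {c : SpecialAux n m}
    (hc : s (.inl (otherP p)) = auxS Shat _ c) :
    BigU Shat Uhat Cl (.inl p) s = al c := by
  have ho := hj (.inl (otherP p)) (by simp [otherP_ne])
  unfold Gad at hi hj ho
  unfold BigU
  have hcard : (univ.filter fun j => (toGadget Shat j (s j)).isSome = true) = {.inl p} := by
    ext j
    simp only [Finset.mem_filter, Finset.mem_univ, true_and, Finset.mem_singleton]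
    exact ⟨fun h => by_contra fun h' => hj j h' h, fun h => h ▸ hi⟩
  rw [dif_neg (fun h => ho (h _)), hcard]
  have hs : specialOf Shat (otherP p) s = Sum.inr c := hc
  simp only [Finset.card_singleton, lt_irrefl, if_false, if_true, hi, hs]
  rcases c with l | c
  · simp [allowedB, al]
  · simp [allowedB, al]

theorem BigU_gad (i : Player k) (r : ∀ j, Shat j) :
    BigU (n := n) (m := m) Shat Uhat Cl i (fun j => emb Shat j (r j)) = Uhat i r := by
  unfold BigU
  have h : ∀ j, (toGadget Shat j ((fun j => emb (n := n) (m := m) Shat j (r j)) j)).isSome = true :=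
    fun j => gad_emb j (r j)
  rw [dif_pos h]
  congr 1
  funext j
  simp [toGadget_emb]

theorem BigU_none {i : Player k} {s : ∀ j, Strat Shat n m j} (hj : ∀ j, ¬ Gad Shat j (s j))
    {a b : SpecialAux n m} (ha : s (.inl 0) = auxS Shat _ a) (hb : s (.inl 1) = auxS Shat _ b) :
    BigU Shat Uhat Cl i s = (match i with
         | .inl p => if p = 0 then (pairU Cl a b).1 else (pairU Cl a b).2.1
         | .inr _ => (pairU Cl a b).2.2) := by
  unfold Gad at hj
  unfold BigU
  have hcard : (univ.filter fun j => (toGadget Shat j (s j)).isSome = true) = ∅ := by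
    ext j
    simp [hj j]
  rw [dif_neg (fun h => hj _ (h (.inl 0))), hcard]
  have hs0 : specialOf Shat 0 s = Sum.inr a := ha
  have hs1 : specialOf Shat 1 s = Sum.inr b := hb
  simp only [Finset.card_empty, hs0, hs1]
  simp

theorem pairU_nonneg (a b : SpecialAux n m) :
    0 ≤ (pairU Cl a b).1 ∧ 0 ≤ (pairU Cl a b).2.1 ∧ 0 ≤ (pairU Cl a b).2.2 := by
  rcases a with a | a | a <;> rcases b with b | b | b <;> simp only [pairU] <;>
    (try split_ifs) <;> simp

theorem BigU_nonneg (hWL : ∀ i s, Uhat i s = 0 ∨ Uhat i s = 1) (i : Player k)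
    (s : ∀ j, Strat Shat n m j) : 0 ≤ BigU Shat Uhat Cl i s := by
  by_cases hno : ∀ j, ¬ Gad Shat j (s j)
  · obtain ⟨a, ha⟩ := aux_of_not_gad 0 _ (hno (.inl 0))
    obtain ⟨b, hb⟩ := aux_of_not_gad 1 _ (hno (.inl 1))
    rw [BigU_none hno ha hb]
    have := pairU_nonneg (Cl := Cl) a b
    rcases i with p | q
    · dsimp only
      split_ifs
      · exact this.1
      · exact this.2.1
    · exact this.2.2
  push Not at hno
  obtain ⟨j, hj⟩ := hno
  by_cases hall : ∀ j, Gad Shat j (s j)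
  · choose r hr using fun j => (gad_iff j _).1 (hall j)
    rw [show s = fun j => emb Shat j (r j) from funext hr, BigU_gad]
    rcases hWL i r with h | h <;> rw [h] <;> norm_num
  push Not at hall
  obtain ⟨l, hl⟩ := hall
  unfold BigU
  rw [dif_neg (fun h => hl (h l))]
  have hc : (univ.filter fun j => (toGadget Shat j (s j)).isSome = true).card ≠ 0 := by
    refine Finset.card_ne_zero.2 ⟨j, ?_⟩
    unfold Gad at hj
    simp [hj]
  by_cases h1 : 1 < (univ.filter fun j => (toGadget Shat j (s j)).isSome = true).card
  · rw [if_pos h1]; split_ifs <;> norm_num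
  · rw [if_neg h1, if_pos (by omega)]
    split_ifs
    · rcases i with p | q
      · dsimp only; split_ifs <;> norm_num
      · norm_num
    · norm_num

theorem pos_dev [∀ i, Nonempty (Shat i)]
    (hPUP : ∀ (i : Player k) (s : ∀ j, Shat j), ∃ t, 0 < Uhat i (Function.update s i t))
    {i j : Player k} (s : ∀ j, Strat Shat n m j) (hij : j ≠ i) (hj : Gad Shat j (s j)) :
    ∃ t, 0 < BigU Shat Uhat Cl i (Function.update s i (emb Shat i t)) := by
  by_cases hall : ∀ l, l ≠ i → Gad Shat l (s l)
  · have : ∀ l, ∃ a, l ≠ i → s l = emb Shat l a := by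
      intro l
      by_cases h : l = i
      · exact ⟨Classical.arbitrary _, fun h' => absurd h h'⟩
      · obtain ⟨a, ha⟩ := (gad_iff l _).1 (hall l h)
        exact ⟨a, fun _ => ha⟩
    choose r hr using this
    obtain ⟨t, ht⟩ := hPUP i r
    refine ⟨t, ?_⟩
    have e : Function.update s i (emb Shat i t) =
        fun j => emb Shat j (Function.update r i t j) := by
      funext l
      by_cases h : l = i
      · subst h; simp
      · simp [h, hr l h]
    rw [e, BigU_gad]
    exact ht
  · push Not at hall
    obtain ⟨l, hl, hl'⟩ := hall
    refine ⟨Classical.arbitrary _, ?_⟩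
    rw [BigU_one (j := j) (l := l)]
    · norm_num
    · rw [Function.update_self]; exact gad_emb _ _
    · rwa [Function.update_of_ne hij]
    · exact hij.symm
    · rwa [Function.update_of_ne hl]

/-- Product weights. -/
noncomputable def W (Shat : Player k → Type) (p : Fin 2) (f : SpecialAux n m → ℝ) :
    ∀ j : Player k, Strat Shat n m j → ℝ
  | .inl q => fun x => if q = p then 1 else Sum.elim (fun _ => 0) f x
  | .inr _ => fun x => Sum.elim (fun _ => 0) (fun _ => 1) x

theorem W_gad (p : Fin 2) (f : SpecialAux n m → ℝ) (j : Player k) (hj : j ≠ .inl p)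
    (a : Shat j) : W Shat p f j (emb Shat j a) = 0 := by
  rcases j with q | q
  · have : q ≠ p := fun h => hj (by rw [h])
    simp [W, this, emb]
  · simp [W, emb]

theorem W_zero (p : Fin 2) (f : SpecialAux n m → ℝ) (s : ∀ j, Strat Shat n m j) (j : Player k)
    (hj : j ≠ .inl p) (hg : Gad Shat j (s j)) : ∏ l, W Shat p f l (s l) = 0 := by
  refine Finset.prod_eq_zero (Finset.mem_univ j) ?_
  obtain ⟨a, ha⟩ := (gad_iff _ _).1 hg
  rw [ha, W_gad _ _ _ hj]

theorem prod_player (p : Fin 2) (f : Player k → ℝ) :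
    ∏ j, f j = f (.inl p) * f (.inl (otherP p)) * ∏ q, f (.inr q) := by
  rw [Fintype.prod_sum_type, Fin.prod_univ_two]
  congr 1
  revert p
  rw [Fin.forall_fin_two]
  exact ⟨rfl, mul_comm _ _⟩

theorem W_val (p : Fin 2) (f : SpecialAux n m → ℝ) (s : ∀ j, Strat Shat n m j)
    (hj : ∀ j, j ≠ .inl p → ¬ Gad Shat j (s j)) {c : SpecialAux n m}
    (hc : s (.inl (otherP p)) = auxS Shat _ c) : ∏ l, W Shat p f l (s l) = f c := by
  rw [prod_player p, hc]
  have : ∏ q, W Shat p f (.inr q) (s (.inr q)) = 1 := by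
    refine Finset.prod_eq_one fun q _ => ?_
    rw [delta_of_not_gad q _ (hj (.inr q) (by simp))]
    rfl
  rw [this]
  simp [W, auxS, otherP_ne]

theorem E_W (p : Fin 2) (f : SpecialAux n m → ℝ) (σ : ∀ j, Strat Shat n m j → ℝ)
    (hσ : ∑ x, σ (.inl p) x = 1) :
    ∑ s : ∀ j, Strat Shat n m j, (∏ j, σ j (s j)) * ∏ j, W Shat p f j (s j) =
      (∑ c, σ (.inl (otherP p)) (auxS Shat _ c) * f c) * ∏ q, σ (.inr q) (deltaStrat Shat q) := by
  simp only [← Finset.prod_mul_distrib]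
  have := Fintype.prod_sum (fun j (x : Strat Shat n m j) => σ j x * W Shat p f j x)
  rw [← this, prod_player p]
  have e1 : ∑ x, σ (.inl p) x * W Shat p f (.inl p) x = 1 := by
    simp [W, hσ]
  have e2 : ∑ x, σ (.inl (otherP p)) x * W Shat p f (.inl (otherP p)) x =
      ∑ c, σ (.inl (otherP p)) (auxS Shat _ c) * f c := by
    rw [sum_strat]
    simp only [W_gad p f (.inl (otherP p)) (by simp [otherP_ne]), mul_zero, Finset.sum_const_zero,
      zero_add]
    simp [W, auxS, otherP_ne]
  have e3 : ∀ q, ∑ x, σ (.inr q) x * W Shat p f (.inr q) x = σ (.inr q) (deltaStrat Shat q) := by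
    intro q
    rw [sum_strat']
    simp only [W_gad p f (.inr q) (by simp), mul_zero, Finset.sum_const_zero,
      zero_add]
    simp [W, deltaStrat]
  rw [e1, e2, one_mul]
  simp only [e3]

/-- Payoff of a special player from non-gadget strategies. -/
noncomputable def uP (Cl : Fin m → Finset (Lit n)) (p : Fin 2) (c b : SpecialAux n m) : ℝ :=
  if p = 0 then (pairU Cl c b).1 else (pairU Cl b c).2.1

theorem BigU_aux (p : Fin 2) (c : SpecialAux n m) (s : ∀ j, Strat Shat n m j) :
    BigU Shat Uhat Cl (.inl p) (Function.update s (.inl p) (auxS Shat p c)) =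
      ∏ j, W Shat p (uP Cl p c) j (s j) := by
  by_cases h : ∃ j, j ≠ .inl p ∧ Gad Shat j (s j)
  · obtain ⟨j, hj, hg⟩ := h
    rw [W_zero _ _ _ j hj hg, BigU_zero (j := j)]
    · rw [Function.update_self]; exact not_gad_aux _ _
    · rwa [Function.update_of_ne hj]
  · push Not at h
    obtain ⟨b, hb⟩ := aux_of_not_gad _ _ (h (.inl (otherP p)) (by simp [otherP_ne]))
    rw [W_val p _ s h hb]
    have hno : ∀ j, ¬ Gad Shat j (Function.update s (.inl p) (auxS Shat p c) j) := by
      intro j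
      by_cases hj : j = .inl p
      · subst hj; rw [Function.update_self]; exact not_gad_aux _ _
      · rw [Function.update_of_ne hj]; exact h j hj
    revert hno hb
    have hp : p = 0 ∨ p = 1 := by omega
    rcases hp with rfl | rfl
    · intro hb hno
      rw [BigU_none hno (a := c) (b := b)]
      · rfl
      · rw [Function.update_self]
      · rw [Function.update_of_ne (by simp)]; exact hb
    · intro hb hno
      rw [BigU_none hno (a := b) (b := c)]
      · rfl
      · rw [Function.update_of_ne (by simp)]; exact hb
      · rw [Function.update_self]

theorem BigU_ge (hWL : ∀ i s, Uhat i s = 0 ∨ Uhat i s = 1) (p : Fin 2) (t : Shat (.inl p))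
    (s : ∀ j, Strat Shat n m j) :
    ∏ j, W Shat p al j (s j) ≤
      BigU Shat Uhat Cl (.inl p) (Function.update s (.inl p) (emb Shat _ t)) := by
  by_cases h : ∃ j, j ≠ .inl p ∧ Gad Shat j (s j)
  · obtain ⟨j, hj, hg⟩ := h
    rw [W_zero _ _ _ j hj hg]
    exact BigU_nonneg hWL _ _
  · push Not at h
    obtain ⟨b, hb⟩ := aux_of_not_gad _ _ (h (.inl (otherP p)) (by simp [otherP_ne]))
    rw [W_val p _ s h hb]
    refine (BigU_single (c := b) ?_ ?_ ?_).ge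
    · rw [Function.update_self]; exact gad_emb _ _
    · intro j hj
      rw [Function.update_of_ne hj]; exact h j hj
    · rw [Function.update_of_ne (by simp [otherP_ne])]; exact hb

theorem lift_emb (σh : ∀ i, Shat i → ℝ) (i : Player k) (a : Shat i) :
    liftProfile (n := n) (m := m) Shat σh i (emb Shat i a) = σh i a := by
  cases i <;> rfl

theorem lift_not (σh : ∀ i, Shat i → ℝ) (i : Player k) (x : Strat Shat n m i)
    (h : ¬ Gad Shat i x) : liftProfile (n := n) (m := m) Shat σh i x = 0 := by
  rcases i with i | i
  · rcases x with a | a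
    · exact absurd rfl h
    · rfl
  · rcases x with a | a
    · exact absurd rfl h
    · rfl

theorem emb_inj (i : Player k) : Function.Injective (emb (n := n) (m := m) Shat i) := by
  intro a b h
  have := congrArg (toGadget Shat i) h
  rw [toGadget_emb, toGadget_emb] at this
  exact Option.some.inj this

theorem EU_lift (σh : ∀ i, Shat i → ℝ) (i : Player k) :
    EU (BigU (n := n) (m := m) Shat Uhat Cl) (liftProfile Shat σh) i = EU Uhat σh i := by
  unfold EU
  symm
  refine Finset.sum_of_injOn (fun r j => emb Shat j (r j)) ?_ (by simp) ?_ ?_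
  · intro r _ r' _ h
    funext j
    exact emb_inj j (congrFun h j)
  · intro s _ hs
    have : ∃ j, ¬ Gad Shat j (s j) := by
      by_contra! hh
      choose r hr using fun j => (gad_iff j _).1 (hh j)
      exact hs ⟨r, by simp, (funext hr).symm⟩
    obtain ⟨j, hj⟩ := this
    rw [Finset.prod_eq_zero (Finset.mem_univ j) (lift_not σh j _ hj), zero_mul]
  · intro r _
    simp only [lift_emb, BigU_gad]

theorem sum_gad (i : Player k) (f : Strat Shat n m i → ℝ) (h : ∀ x, ¬ Gad Shat i x → f x = 0) :
    ∑ a, f (emb Shat i a) = ∑ x, f x := by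
  refine Finset.sum_of_injOn (emb Shat i) (emb_inj i).injOn (by simp) ?_ (fun _ _ => rfl)
  intro x _ hx
  refine h x fun hg => ?_
  obtain ⟨a, ha⟩ := (gad_iff _ _).1 hg
  exact hx ⟨a, by simp, ha.symm⟩

theorem lift_NE (σ : ∀ i, Strat Shat n m i → ℝ) (hNE : IsNashEq (BigU Shat Uhat Cl) σ)
    (hz : ∀ i x, ¬ Gad Shat i x → σ i x = 0) :
    ∃ σh : ∀ i, Shat i → ℝ, IsNashEq Uhat σh ∧ σ = liftProfile Shat σh := by
  have hσ : σ = liftProfile Shat (fun i a => σ i (emb Shat i a)) := by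
    funext i x
    by_cases h : Gad Shat i x
    · obtain ⟨a, rfl⟩ := (gad_iff _ _).1 h
      rw [lift_emb]
    · rw [lift_not _ _ _ h, hz _ _ h]
  refine ⟨fun i a => σ i (emb Shat i a), ⟨fun i => ⟨fun a => (hNE.1 i).1 _, ?_⟩, ?_⟩, hσ⟩
  · rw [sum_gad i _ (hz i), (hNE.1 i).2]
  · intro i τ hτ
    set σh : ∀ i, Shat i → ℝ := fun i a => σ i (emb Shat i a) with hσh
    rw [← EU_lift (n := n) (m := m) (Cl := Cl) (Uhat := Uhat) σh i, ← hσ,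
      ← EU_lift (n := n) (m := m) (Cl := Cl)]
    have e : liftProfile (n := n) (m := m) Shat (Function.update σh i τ) =
        Function.update σ i (liftProfile Shat (Function.update σh i τ) i) := by
      funext j x
      by_cases hj : j = i
      · subst hj; rw [Function.update_self]
      · rw [Function.update_of_ne hj]
        by_cases h : Gad Shat j x
        · obtain ⟨a, rfl⟩ := (gad_iff _ _).1 h
          rw [lift_emb, Function.update_of_ne hj]
        · rw [lift_not _ _ _ h, hz _ _ h]
    rw [e]
    refine hNE.2 i _ ⟨fun x => ?_, ?_⟩
    · by_cases h : Gad Shat i x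
      · obtain ⟨a, rfl⟩ := (gad_iff _ _).1 h
        rw [lift_emb, Function.update_self]; exact hτ.1 a
      · rw [lift_not _ _ _ h]
    · rw [← sum_gad i _ (fun x hx => lift_not _ _ _ hx)]
      simp only [lift_emb, Function.update_self]
      exact hτ.2

end big

/-- For the win-lose game `G = G(Ĝ, φ)` built from an `r`-player win-lose gadget game
`Ĝ` with the positive utility property and a 3SAT formula `φ` with `n ≥ 4` variables:
every Nash equilibrium `σ` of `G` that is not (the lift of) a Nash equilibrium of `Ĝ`
induces an assignment `γ` for `φ` such that each special player plays exactly the `n`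
literals of `γ`, each with probability `1/n`; both special players get expected utility
`2/n`; and every non-special player plays `δ` with probability `1`. -/
theorem reduction_literal_equilibria
    {k n m : ℕ} (hn : 4 ≤ n)
    (Shat : Player k → Type) [∀ i, Fintype (Shat i)] [∀ i, Nonempty (Shat i)]
    (Uhat : (i : Player k) → (∀ j, Shat j) → ℝ)
    (hWL : ∀ i s, Uhat i s = 0 ∨ Uhat i s = 1)
    (hPUP : ∀ (i : Player k) (s : ∀ j, Shat j), ∃ t, 0 < Uhat i (Function.update s i t))
    (Cl : Fin m → Finset (Lit n)) (h3 : ∀ c, (Cl c).card = 3)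
    (σ : ∀ i, Strat Shat n m i → ℝ) (hNE : IsNashEq (BigU Shat Uhat Cl) σ)
    (hnotgadget : ¬ ∃ σh : ∀ i, Shat i → ℝ,
      IsNashEq Uhat σh ∧ σ = liftProfile Shat σh) :
    ∃ γ : Fin n → Bool,
      (∀ (p : Fin 2) (j : Fin n), σ (Sum.inl p) (litStrat Shat p j (γ j)) = 1 / (n : ℝ)) ∧
      (∀ (p : Fin 2) (t : Strat Shat n m (Sum.inl p)),
        (∀ j : Fin n, t ≠ litStrat Shat p j (γ j)) → σ (Sum.inl p) t = 0) ∧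
      (∀ p : Fin 2, EU (BigU Shat Uhat Cl) σ (Sum.inl p) = 2 / (n : ℝ)) ∧
      (∀ q : Fin k, σ (Sum.inr q) (deltaStrat Shat q) = 1) := by
  classical
  have hP0 : ∀ s : ∀ j, Strat Shat n m j, 0 ≤ ∏ j, σ j (s j) := fun s =>
    Finset.prod_nonneg fun j _ => (hNE.1 j).1 _
  have hU0 := fun i s => BigU_nonneg (n := n) (m := m) (Cl := Cl) hWL i s
  choose z hz using fun j => exists_supp (hNE.1 j)
  -- every player plays a non-gadget strategy with positive probability
  have hB : ∀ j, ∃ x, ¬ Gad Shat j x ∧ 0 < σ j x := by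
    intro j
    by_contra! hcon
    have hj0 : ∀ x, ¬ Gad Shat j x → σ j x = 0 := fun x hx =>
      le_antisymm (hcon x hx) ((hNE.1 j).1 x)
    refine hnotgadget (lift_NE σ hNE fun i c hc => ?_)
    by_cases hij : i = j
    · subst hij; exact hj0 c hc
    refine le_antisymm (not_lt.1 fun hpos => ?_) ((hNE.1 i).1 c)
    have hzj : Gad Shat j (z j) := by
      by_contra h
      exact (hz j).ne' (hj0 _ h)
    obtain ⟨t, ht⟩ := pos_dev (Cl := Cl) hPUP z (Ne.symm hij) hzj
    have h1 := NE_supp hNE i c hpos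
    have h2 := NE_dev hNE i (emb Shat i t)
    have h3 : DV (BigU Shat Uhat Cl) σ i c = 0 := by
      refine Finset.sum_eq_zero fun s _ => ?_
      by_cases hs : Gad Shat j (s j)
      · rw [BigU_zero (j := j), mul_zero]
        · rwa [Function.update_self]
        · rwa [Function.update_of_ne (Ne.symm hij)]
      · rw [Finset.prod_eq_zero (Finset.mem_univ j) (hj0 _ hs), zero_mul]
    have h4 : 0 < DV (BigU Shat Uhat Cl) σ i (emb Shat i t) :=
      Finset.sum_pos' (fun s _ => mul_nonneg (hP0 s) (hU0 _ _))
        ⟨z, Finset.mem_univ _, mul_pos (Finset.prod_pos fun j _ => hz j) ht⟩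
    linarith
  set Dl : ℝ := ∏ q, σ (.inr q) (deltaStrat Shat q) with hDl
  have Dpos : 0 < Dl := by
    refine Finset.prod_pos fun q _ => ?_
    obtain ⟨x, hx, hx'⟩ := hB (.inr q)
    rwa [delta_of_not_gad q x hx] at hx'
  have hDaux : ∀ p c, DV (BigU Shat Uhat Cl) σ (.inl p) (auxS Shat p c) =
      (∑ b, σ (.inl (otherP p)) (auxS Shat _ b) * uP Cl p c b) * Dl := by
    intro p c
    rw [← E_W p _ σ (hNE.1 _).2]
    unfold DV
    simp only [BigU_aux]
  have hDgad : ∀ p t, (∑ b, σ (.inl (otherP p)) (auxS Shat _ b) * al b) * Dl ≤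
      DV (BigU Shat Uhat Cl) σ (.inl p) (emb Shat _ t) := by
    intro p t
    rw [← E_W p _ σ (hNE.1 _).2]
    exact Finset.sum_le_sum fun s _ => mul_le_mul_of_nonneg_left (BigU_ge hWL p t s) (hP0 s)
  have hDstrict : ∀ (p : Fin 2) (j : Player k) (x : Strat Shat n m j), j ≠ .inl p → Gad Shat j x →
      0 < σ j x → ∃ t, (∑ b, σ (.inl (otherP p)) (auxS Shat _ b) * al b) * Dl <
      DV (BigU Shat Uhat Cl) σ (.inl p) (emb Shat _ t) := by
    intro p j x hj hx hpos
    have hg : Gad Shat j (Function.update z j x j) := by rwa [Function.update_self]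
    obtain ⟨t, ht⟩ := pos_dev (Cl := Cl) hPUP (Function.update z j x) hj hg
    refine ⟨t, ?_⟩
    rw [← E_W p _ σ (hNE.1 _).2]
    refine Finset.sum_lt_sum
      (fun s _ => mul_le_mul_of_nonneg_left (BigU_ge hWL p t s) (hP0 s))
      ⟨Function.update z j x, Finset.mem_univ _, ?_⟩
    rw [W_zero p _ _ j hj hg, mul_zero]
    refine mul_pos (Finset.prod_pos fun l _ => ?_) ht
    by_cases hl : l = j
    · subst hl; rwa [Function.update_self]
    · rw [Function.update_of_ne hl]; exact hz l
  -- best responses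
  have hbr : ∀ p c, 0 < σ (.inl p) (auxS Shat p c) → ∀ c',
      ∑ b, σ (.inl (otherP p)) (auxS Shat _ b) * uP Cl p c' b ≤
      ∑ b, σ (.inl (otherP p)) (auxS Shat _ b) * uP Cl p c b := by
    intro p c hc c'
    have h1 := NE_supp hNE _ _ hc
    have h2 := NE_dev hNE _ (auxS Shat p c')
    rw [← h1, hDaux, hDaux] at h2
    exact le_of_mul_le_mul_right h2 Dpos
  have hbrA : ∀ p c, 0 < σ (.inl p) (auxS Shat p c) →
      ∑ b, σ (.inl (otherP p)) (auxS Shat _ b) * al b ≤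
      ∑ b, σ (.inl (otherP p)) (auxS Shat _ b) * uP Cl p c b := by
    intro p c hc
    have h1 := NE_supp hNE _ _ hc
    have h2 := NE_dev hNE _ (emb Shat (.inl p) (Classical.arbitrary _))
    rw [← h1, hDaux] at h2
    exact le_of_mul_le_mul_right ((hDgad p _).trans h2) Dpos
  have hsup : ∀ p, ∃ c, 0 < σ (.inl p) (auxS Shat p c) := by
    intro p
    obtain ⟨x, hx, hx'⟩ := hB (.inl p)
    obtain ⟨c, rfl⟩ := aux_of_not_gad _ _ hx
    exact ⟨c, hx'⟩
  obtain ⟨γ, gX, gY, zX, zY, r1, r2, A1, A2⟩ := core hn Cl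
    (fun c => σ (.inl 0) (auxS Shat 0 c)) (fun c => σ (.inl 1) (auxS Shat 1 c))
    (fun c => (hNE.1 _).1 _) (fun c => (hNE.1 _).1 _) (hsup 0) (hsup 1)
    (hbr 0) (hbr 1) (hbrA 0) (hbrA 1)
  have n0 : (0 : ℝ) < n := by
    have : 0 < n := by omega
    exact_mod_cast this
  let j0 : Fin n := ⟨0, by omega⟩
  have spos : ∀ p : Fin 2, 0 < ∑ c, σ (.inl p) (auxS Shat p c) := by
    intro p
    obtain ⟨c, hc⟩ := hsup p
    exact Finset.sum_pos' (fun b _ => (hNE.1 _).1 _) ⟨c, Finset.mem_univ _, hc⟩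
  -- uniform versions in the player
  have hg : ∀ (p : Fin 2) j, σ (.inl p) (auxS Shat p (.inl (j, γ j))) =
      (∑ c, σ (.inl p) (auxS Shat p c)) / n := by
    rw [Fin.forall_fin_two]; exact ⟨gX, gY⟩
  have hzr : ∀ (p : Fin 2) c, (∀ j, c ≠ .inl (j, γ j)) → σ (.inl p) (auxS Shat p c) = 0 := by
    rw [Fin.forall_fin_two]; exact ⟨zX, zY⟩
  have hr : ∀ (p : Fin 2) j, ∑ b, σ (.inl (otherP p)) (auxS Shat _ b) * uP Cl p (.inl (j, γ j)) b =
      2 * (∑ c, σ (.inl (otherP p)) (auxS Shat _ c)) / n := by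
    rw [Fin.forall_fin_two]; exact ⟨r1, r2⟩
  have hA : ∀ (p : Fin 2), ∑ b, σ (.inl (otherP p)) (auxS Shat _ b) * al b =
      2 * (∑ c, σ (.inl (otherP p)) (auxS Shat _ c)) / n := by
    rw [Fin.forall_fin_two]; exact ⟨A1, A2⟩
  have hgpos : ∀ (p : Fin 2) j, 0 < σ (.inl p) (auxS Shat p (.inl (j, γ j))) := fun p j => by
    rw [hg]; exact div_pos (spos p) n0
  -- nobody plays a gadget strategy
  have hno' : ∀ (p : Fin 2) (j : Player k) (x : Strat Shat n m j), j ≠ .inl p → Gad Shat j x →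
      σ j x = 0 := by
    intro p j x hj hx
    refine le_antisymm (not_lt.1 fun hpos => ?_) ((hNE.1 j).1 x)
    obtain ⟨t, ht⟩ := hDstrict p j x hj hx hpos
    have h1 := NE_supp hNE _ _ (hgpos p j0)
    have h2 := NE_dev hNE _ (emb Shat (.inl p) t)
    rw [← h1, hDaux, hr] at h2
    rw [hA] at ht
    linarith
  have hno : ∀ (j : Player k) (x : Strat Shat n m j), Gad Shat j x → σ j x = 0 := by
    intro j x hx
    by_cases h : j = .inl 0
    · exact hno' 1 j x (by rw [h]; simp) hx
    · exact hno' 0 j x h hx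
  have hsum : ∀ p : Fin 2, ∑ c, σ (.inl p) (auxS Shat p c) = 1 := by
    intro p
    have := (hNE.1 (.inl p)).2
    rw [sum_strat, Finset.sum_eq_zero (fun a _ => hno _ _ (gad_emb _ a)), zero_add] at this
    exact this
  have hdel : ∀ q : Fin k, σ (.inr q) (deltaStrat Shat q) = 1 := by
    intro q
    have := (hNE.1 (.inr q)).2
    rw [sum_strat', Finset.sum_eq_zero (fun a _ => hno _ _ (gad_emb _ a)), zero_add] at this
    exact this
  have hD1 : Dl = 1 := by
    rw [hDl]; exact Finset.prod_eq_one fun q _ => hdel q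
  refine ⟨γ, fun p j => ?_, fun p t ht => ?_, fun p => ?_, hdel⟩
  · have := hg p j
    rw [hsum] at this
    exact this
  · by_cases h : Gad Shat _ t
    · exact hno _ _ h
    · obtain ⟨c, rfl⟩ := aux_of_not_gad _ _ h
      exact hzr p c fun j hj => ht j (by rw [hj]; rfl)
  · rw [← NE_supp hNE _ _ (hgpos p j0), hDaux, hr, hsum, hD1]; ring
end
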